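/- arXiv:2002.06577 — 2 statements merged into one kernel-verified Lean document; each statement's English description precedes it below -/
import Mathlib

section
/- Let A ∈ ℝ^{n×n}, B ∈ ℝ^{n×m} with (A,B) stabilizable and all eigenvalues of A in the closed unit disc, and let κ̄ ∈ ℕ satisfy κ̄·ω_max < π/2. Then there exist ρ > 1/2 and ε* > 0, depending only on A, B and κ̄, such that for every ε ∈ (0, ε*] the following holds. Let N ∈ ℕ, let a_{ij} ≥ 0 (i,j = 1,…,N) with a_{ii} = 0, let ι_i ∈ {0,1}, set d_in(i) = Σ_j a_{ij}, let L be the Laplacian matrix of the weights (a_{ij}), L̄ = L + diag(ι_1,…,ι_N) with entries ℓ̄_{ij}, D_in = diag(d_in(1),…,d_in(N)), and D̄ = I − (2I + D_in)^{−1} L̄, and assume all eigenvalues of D̄ lie in the open unit disc. Let κ_1, …, κ_N ∈ {0,…,κ̄}, let x_r : ℕ → ℝ^n satisfy x_r(k+1) = A x_r(k), and consider for i = 1,…,N the closed-loop full-state-coupling system x_i(k+1) = A x_i(k) + B u_i(k − κ_i), χ_i(k+1) = A χ_i(k) + B u_i(k − κ_i) + A ζ̄_i(k) − A ζ̂_i(k),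 u_i(k) = −ρ K_ε χ_i(k), where ζ̄_i(k) = (2 + d_in(i))^{−1} [ Σ_{j=1}^N a_{ij}(x_i(k) − x_j(k)) + ι_i (x_i(k) − x_r(k)) ] and ζ̂_i(k) = (2 + d_in(i))^{−1} Σ_{j=1}^N ℓ̄_{ij} χ_j(k), with arbitrary initial data for x_i, χ_i, u_i on {−κ̄, …, 0}. Then x_i(k) − x_r(k) → 0 as k → ∞ for every i = 1, …, N. -/
open Matrix Filter Topology Kronecker
open scoped Classical

noncomputable section

/-- A complex square matrix is Schur stable if all its eigenvalues lie in the open unit disc. -/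
def SchurStableC {ι : Type*} [Fintype ι] [DecidableEq ι] (M : Matrix ι ι ℂ) : Prop :=
  ∀ μ ∈ spectrum ℂ M, ‖μ‖ < 1

/-- A real square matrix is Schur stable if all its (complex) eigenvalues lie in the open
unit disc. -/
def SchurStable {ι : Type*} [Fintype ι] [DecidableEq ι] (M : Matrix ι ι ℝ) : Prop :=
  SchurStableC (M.map Complex.ofReal)

/-- All eigenvalues of a real square matrix lie in the closed unit disc. -/
def EigInClosedUnitDisc {ι : Type*} [Fintype ι] [DecidableEq ι] (M : Matrix ι ι ℝ) : Prop :=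
  ∀ μ ∈ spectrum ℂ (M.map Complex.ofReal), ‖μ‖ ≤ 1

/-- The pair (A,B) is stabilizable. -/
def Stabilizable {n m : ℕ} (A : Matrix (Fin n) (Fin n) ℝ) (B : Matrix (Fin n) (Fin m) ℝ) : Prop :=
  ∃ K : Matrix (Fin m) (Fin n) ℝ, SchurStable (A - B * K)

/-- The pair (C,A) is detectable. -/
def Detectable {n q : ℕ} (C : Matrix (Fin q) (Fin n) ℝ) (A : Matrix (Fin n) (Fin n) ℝ) : Prop :=
  ∃ F : Matrix (Fin n) (Fin q) ℝ, SchurStable (A - F * C)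

/-- `P` is a positive definite solution of the discrete algebraic Riccati equation
`AᵀPA − P − AᵀPB(I + BᵀPB)⁻¹BᵀPA + εI = 0`. -/
def IsDARESol {n m : ℕ} (A : Matrix (Fin n) (Fin n) ℝ) (B : Matrix (Fin n) (Fin m) ℝ)
    (ε : ℝ) (P : Matrix (Fin n) (Fin n) ℝ) : Prop :=
  P.PosDef ∧
    Aᵀ * P * A - P - Aᵀ * P * B * (1 + Bᵀ * P * B)⁻¹ * (Bᵀ * P * A)
      + ε • (1 : Matrix (Fin n) (Fin n) ℝ) = 0

/-- The low-gain feedback `K = (I + BᵀPB)⁻¹BᵀPA`. -/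
def gainK {n m : ℕ} (A : Matrix (Fin n) (Fin n) ℝ) (B : Matrix (Fin n) (Fin m) ℝ)
    (P : Matrix (Fin n) (Fin n) ℝ) : Matrix (Fin m) (Fin n) ℝ :=
  (1 + Bᵀ * P * B)⁻¹ * (Bᵀ * P * A)

/-- `ω_max`: zero if `A` is Schur stable, otherwise the largest `ω ∈ [0,π]` with
`det(e^{iω}I − A) = 0`. -/
def omegaMax {n : ℕ} (A : Matrix (Fin n) (Fin n) ℝ) : ℝ :=
  if SchurStable A then 0
  else sSup {ω : ℝ | ω ∈ Set.Icc 0 Real.pi ∧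
    (Complex.exp (ω * Complex.I) • (1 : Matrix (Fin n) (Fin n) ℂ)
      - A.map Complex.ofReal).det = 0}

/-- In-degree `d_in(i) = Σ_j a_{ij}`. -/
def dIn {N : ℕ} (a : Fin N → Fin N → ℝ) (i : Fin N) : ℝ := ∑ j, a i j

/-- The Laplacian matrix of the weights `a`. -/
def lapL {N : ℕ} (a : Fin N → Fin N → ℝ) : Matrix (Fin N) (Fin N) ℝ :=
  Matrix.of fun i j => if i = j then dIn a i else -a i j

/-- The expanded Laplacian `L̄ = L + diag(ι)`. -/
def lapLbar {N : ℕ} (a : Fin N → Fin N → ℝ) (ι : Fin N → ℝ) : Matrix (Fin N) (Fin N) ℝ :=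
  lapL a + Matrix.diagonal ι

/-- `D̄ = I − (2I + D_in)⁻¹ L̄`. -/
def DbarM {N : ℕ} (a : Fin N → Fin N → ℝ) (ι : Fin N → ℝ) : Matrix (Fin N) (Fin N) ℝ :=
  1 - ((2 : ℝ) • (1 : Matrix (Fin N) (Fin N) ℝ) + Matrix.diagonal (dIn a))⁻¹ * lapLbar a ι

/-!
The observer errors `x_i - x_r - χ_i` do not see the inputs: together they obey an autonomous
recursion with matrix `D̄ ⊗ A`, which is stable because its eigenvalues are products of a number in
the open unit disc and one in the closed unit disc. The tracking error `x_i - x_r` is driven by them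
and by its own delayed feedback. The solutions of such a recursion form a finite-dimensional space
invariant under the time shift, so they all tend to `0` as soon as every exponential solution has
ratio `z` in the open unit disc. What remains is the delayed loop `z v = (A - ρ z^{-κ} B K_ε) v`.

As `ε → 0`, compactness gives `P_ε → 0` and `K_ε → 0`, since a nonzero limit would solve the Riccati
equation without state weight and thereby exhibit an uncontrollable mode on the unit circle. Hence
for small `ε` a `z` outside the open disc must be close to an eigenvalue `e^{iθ}` of `A` with
`|θ| ≤ ω_max`, where `Re (ρ z^{-κ}) > 1/2` because `ρ cos (κ̄ ω_max) > 1/2`. For such `z` completing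
the square in the Riccati equation shows that `v* P_ε v` decreases along the loop, so `|z| < 1`.
-/

section Shift

theorem tendsto_pow_atTop_nhds_zero_of_forall_mem_spectrum_norm_lt_one {R : Type*} [NormedRing R]
    [NormedAlgebra ℂ R] [CompleteSpace R] {a : R} (ha : ∀ μ ∈ spectrum ℂ a, ‖μ‖ < 1) :
    Tendsto (fun k : ℕ => a ^ k) atTop (𝓝 0) := by
  rcases subsingleton_or_nontrivial R with hR | hR
  · simp only [Subsingleton.elim _ (0 : R), tendsto_const_nhds]
  have hradius : spectralRadius ℂ a < (1 : NNReal) := spectrum.spectralRadius_lt_of_forall_lt a ha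
  obtain ⟨r, har, hr1⟩ := ENNReal.lt_iff_exists_nnreal_btwn.1 hradius
  have hgelfand := spectrum.pow_nnnorm_pow_one_div_tendsto_nhds_spectralRadius a
  have hbound : ∀ᶠ k : ℕ in atTop, ‖a ^ k‖ ≤ (r : ℝ) ^ k := by
    filter_upwards [hgelfand.eventually_lt_const har, eventually_gt_atTop 0] with k hk hk0
    have hk' : (‖a ^ k‖₊ : ENNReal) < r ^ (k : ℝ) :=
      (ENNReal.rpow_inv_lt_iff (by exact_mod_cast hk0)).1 (one_div (k : ℝ) ▸ hk)
    rw [ENNReal.rpow_natCast] at hk'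
    exact_mod_cast hk'.le
  exact squeeze_zero_norm' hbound
    (tendsto_pow_atTop_nhds_zero_of_lt_one r.2 (by exact_mod_cast hr1))

open scoped Matrix.Norms.L2Operator in
theorem SchurStableC.tendsto_pow {ι : Type*} [Fintype ι] [DecidableEq ι] {M : Matrix ι ι ℂ}
    (hM : SchurStableC M) : Tendsto (fun k : ℕ => M ^ k) atTop (𝓝 0) :=
  tendsto_pow_atTop_nhds_zero_of_forall_mem_spectrum_norm_lt_one hM

theorem mem_spectrum_iff_exists_mulVec_eq_smul {ι : Type*} [Fintype ι] [DecidableEq ι] {𝕜 : Type*}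
    [Field 𝕜] {M : Matrix ι ι 𝕜} {μ : 𝕜} :
    μ ∈ spectrum 𝕜 M ↔ ∃ v, v ≠ 0 ∧ M *ᵥ v = μ • v := by
  rw [← Matrix.spectrum_toLin', ← Module.End.hasEigenvalue_iff_mem_spectrum]
  refine ⟨fun h => ?_, fun ⟨v, hv, hMv⟩ => ?_⟩
  · obtain ⟨v, hv⟩ := h.exists_hasEigenvector
    exact ⟨v, hv.2, hv.apply_eq_smul⟩
  · exact Module.End.hasEigenvalue_of_hasEigenvector
      ⟨Module.End.mem_eigenspace_iff.2 hMv, hv⟩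

variable {V : Type*} [AddCommGroup V] [Module ℂ V]

theorem tendsto_zero_of_shift_invariant [TopologicalSpace V] [IsTopologicalAddGroup V]
    [ContinuousSMul ℂ V] (S : Submodule ℂ (ℕ → V)) [FiniteDimensional ℂ S]
    (hshift : ∀ s ∈ S, (fun k => s (k + 1)) ∈ S)
    (hexp : ∀ (z : ℂ) (v : V), v ≠ 0 → (fun k => z ^ k • v) ∈ S → ‖z‖ < 1)
    {s : ℕ → V} (hs : s ∈ S) : Tendsto s atTop (𝓝 0) := by
  let T : Module.End ℂ S := (LinearMap.funLeft ℂ V Nat.succ).restrict hshift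
  have hT_apply (t : S) (k : ℕ) : (T t : ℕ → V) k = (t : ℕ → V) (k + 1) := rfl
  let b := Module.finBasis ℂ S
  have hstable : SchurStableC (LinearMap.toMatrix b b T) := fun z hz => by
    rw [LinearMap.spectrum_toMatrix, ← Module.End.hasEigenvalue_iff_mem_spectrum] at hz
    obtain ⟨t, ht⟩ := hz.exists_hasEigenvector
    have ht_exp : (t : ℕ → V) = fun k => z ^ k • (t : ℕ → V) 0 := by
      funext k
      induction k with
      | zero => simp
      | succ k ih => rw [← hT_apply, ht.apply_eq_smul, pow_succ', mul_smul, ← ih]; rfl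
    refine hexp z ((t : ℕ → V) 0) (fun h0 => ht.2 (Subtype.ext ?_)) (ht_exp ▸ t.2)
    rw [ht_exp, h0]
    simp only [smul_zero]
    rfl
  have hT_pow (k : ℕ) (t : S) : ((T ^ k) t : ℕ → V) 0 = (t : ℕ → V) k := by
    induction k generalizing t with
    | zero => rfl
    | succ k ih => rw [pow_succ, Module.End.mul_apply, ih, hT_apply]
  let orbitAt : Matrix _ _ ℂ →ₗ[ℂ] V := LinearMap.proj 0 ∘ₗ S.subtype ∘ₗ
    LinearMap.applyₗ (⟨s, hs⟩ : S) ∘ₗ (Matrix.toLin b b).toLinearMap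
  have hlim := (orbitAt.continuous_of_finiteDimensional.tendsto 0).comp hstable.tendsto_pow
  rw [map_zero] at hlim
  refine hlim.congr fun k => ?_
  rw [Function.comp_apply, LinearMap.toMatrix_pow]
  simpa [orbitAt] using hT_pow k ⟨s, hs⟩

theorem finiteDimensional_of_forall_lt_eq_zero [FiniteDimensional ℂ V] (S : Submodule ℂ (ℕ → V))
    (p : ℕ) (hS : ∀ s ∈ S, (∀ k < p, s k = 0) → s = 0) : FiniteDimensional ℂ S := by
  refine FiniteDimensional.of_injective
    (LinearMap.funLeft ℂ V (Fin.val : Fin p → ℕ) ∘ₗ S.subtype)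
    (LinearMap.ker_eq_bot.1 (LinearMap.ker_eq_bot'.2 fun s hs => ?_))
  exact Subtype.ext (hS s s.2 fun k hk => congrFun hs ⟨k, hk⟩)

end Shift

section Spectrum

theorem exists_mem_hasEigenvector_of_mapsTo {𝕜 V : Type*} [Field 𝕜] [IsAlgClosed 𝕜]
    [AddCommGroup V] [Module 𝕜 V] [FiniteDimensional 𝕜 V] {f : Module.End 𝕜 V}
    {W : Submodule 𝕜 V} (hW : W ≠ ⊥) (hf : ∀ v ∈ W, f v ∈ W) :
    ∃ α, ∃ v ∈ W, f.HasEigenvector α v := by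
  have : Nontrivial W := Submodule.nontrivial_iff_ne_bot.2 hW
  obtain ⟨α, hα⟩ := Module.End.exists_eigenvalue (f.restrict hf)
  obtain ⟨v, hv⟩ := hα.exists_hasEigenvector
  refine ⟨α, v, v.2, Module.End.mem_eigenspace_iff.2 ?_, fun h0 => hv.2 (Subtype.ext h0)⟩
  exact congrArg Subtype.val hv.apply_eq_smul

theorem exists_hasEigenvalue_mul_eq_of_commute {𝕜 V : Type*} [Field 𝕜] [IsAlgClosed 𝕜]
    [AddCommGroup V] [Module 𝕜 V] [FiniteDimensional 𝕜 V] {f g : Module.End 𝕜 V}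
    (hfg : Commute f g) {μ : 𝕜} (hμ : (f * g).HasEigenvalue μ) :
    ∃ α β, f.HasEigenvalue α ∧ g.HasEigenvalue β ∧ α * β = μ := by
  have hf : ∀ v ∈ (f * g).eigenspace μ, f v ∈ (f * g).eigenspace μ :=
    Module.End.mapsTo_genEigenspace_of_comm ((Commute.refl f).mul_left hfg.symm) μ 1
  have hg : ∀ v ∈ (f * g).eigenspace μ, g v ∈ (f * g).eigenspace μ :=
    Module.End.mapsTo_genEigenspace_of_comm (hfg.mul_left (Commute.refl g)) μ 1
  obtain ⟨α, v, hvμ, hvα⟩ := exists_mem_hasEigenvector_of_mapsTo hμ hf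
  have hgα : ∀ w ∈ f.eigenspace α, g w ∈ f.eigenspace α :=
    Module.End.mapsTo_genEigenspace_of_comm hfg α 1
  obtain ⟨β, w, ⟨hwμ, hwα⟩, hwβ⟩ := exists_mem_hasEigenvector_of_mapsTo
    (f := g) (W := (f * g).eigenspace μ ⊓ f.eigenspace α)
    (fun h0 => hvα.2 ((Submodule.eq_bot_iff _).1 h0 v ⟨hvμ, hvα.1⟩))
    fun w hw => ⟨hg w hw.1, hgα w hw.2⟩
  refine ⟨α, β, Module.End.hasEigenvalue_of_hasEigenvector hvα,
    Module.End.hasEigenvalue_of_hasEigenvector hwβ, smul_left_injective 𝕜 hwβ.2 ?_⟩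
  have hw : μ • w = f (g w) := (Module.End.mem_eigenspace_iff.1 hwμ).symm
  simp only [hw, hwβ.apply_eq_smul, map_smul, Module.End.mem_eigenspace_iff.1 hwα, smul_smul,
    mul_comm]

theorem exists_apply_apply_eq_smul_of_ker_invariant {𝕜 V W : Type*} [Field 𝕜] [IsAlgClosed 𝕜]
    [AddCommGroup V] [Module 𝕜 V] [FiniteDimensional 𝕜 V] [AddCommGroup W] [Module 𝕜 W]
    {f : Module.End 𝕜 V} {p : V →ₗ[𝕜] W} (hp : p ≠ 0) (hf : ∀ x, p x = 0 → p (f x) = 0) :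
    ∃ v, ∃ α : 𝕜, p v ≠ 0 ∧ p (f v) = α • p v := by
  have : Nontrivial (V ⧸ LinearMap.ker p) :=
    Submodule.Quotient.nontrivial_iff.2 (mt LinearMap.ker_eq_top.1 hp)
  obtain ⟨α, hα⟩ := Module.End.exists_eigenvalue
    ((LinearMap.ker p).mapQ (LinearMap.ker p) f fun x hx => hf x hx)
  obtain ⟨q, hq⟩ := hα.exists_hasEigenvector
  obtain ⟨v, rfl⟩ := (LinearMap.ker p).mkQ_surjective q
  refine ⟨v, α, fun hv => hq.2 ((Submodule.Quotient.mk_eq_zero _).2 hv), ?_⟩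
  have hfv : f v - α • v ∈ LinearMap.ker p := (Submodule.Quotient.eq _).1 hq.apply_eq_smul
  rwa [LinearMap.mem_ker, map_sub, map_smul, sub_eq_zero] at hfv

theorem star_mem_spectrum_of_conjTranspose_mulVec_eq_smul {ι : Type*} [Fintype ι] [DecidableEq ι]
    {M : Matrix ι ι ℂ} {w : ι → ℂ} {μ : ℂ} (hw : w ≠ 0) (hM : Mᴴ *ᵥ w = μ • w) :
    star μ ∈ spectrum ℂ M := by
  rw [← Set.mem_star, ← spectrum.map_star, Matrix.star_eq_conjTranspose]
  exact mem_spectrum_iff_exists_mulVec_eq_smul.2 ⟨w, hw, hM⟩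

/-- In coordinates `E ↦ D E Aᵀ` is the Kronecker product `D ⊗ A`. -/
theorem exists_mul_eq_of_mul_mul_transpose_eq_smul {ι ν : Type*} [Fintype ι] [DecidableEq ι]
    [Fintype ν] [DecidableEq ν] {D : Matrix ι ι ℂ} {A : Matrix ν ν ℂ} {E : Matrix ι ν ℂ} {z : ℂ}
    (hE : E ≠ 0) (h : D * E * Aᵀ = z • E) :
    ∃ α ∈ spectrum ℂ D, ∃ β ∈ spectrum ℂ A, α * β = z := by
  have hcomm : Commute (mulLeftLinearMap ν ℂ D) (mulRightLinearMap ι ℂ Aᵀ) :=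
    LinearMap.ext fun F => (Matrix.mul_assoc D F Aᵀ).symm
  obtain ⟨α, β, hα, hβ, hαβ⟩ := exists_hasEigenvalue_mul_eq_of_commute hcomm (μ := z)
    (Module.End.hasEigenvalue_of_hasEigenvector ⟨Module.End.mem_eigenspace_iff.2
      ((Matrix.mul_assoc D E Aᵀ).symm.trans h), hE⟩)
  obtain ⟨F, hF⟩ := hα.exists_hasEigenvector
  obtain ⟨G, hG⟩ := hβ.exists_hasEigenvector
  obtain ⟨j, hj⟩ : ∃ j, F.col j ≠ 0 := by
    by_contra! h0
    exact hF.2 (Matrix.ext fun i j => congrFun (h0 j) i)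
  obtain ⟨i, hi⟩ : ∃ i, G i ≠ 0 := Function.ne_iff.1 hG.2
  have hFα : D * F = α • F := hF.apply_eq_smul
  have hGβ : G * Aᵀ = β • G := hG.apply_eq_smul
  refine ⟨α, mem_spectrum_iff_exists_mulVec_eq_smul.2 ⟨F.col j, hj, ?_⟩,
    β, mem_spectrum_iff_exists_mulVec_eq_smul.2 ⟨G i, hi, ?_⟩, hαβ⟩
  · funext i
    exact congrFun (congrFun hFα i) j
  · funext j
    rw [mulVec, dotProduct_comm]
    exact congrFun (congrFun hGβ i) j

end Spectrum

section QuadraticForm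

open scoped ComplexOrder

variable {ν β : Type*} [Fintype ν] [Fintype β]

/-- The real number `Re (x* M x)` as an `ℝ`-linear function of the matrix `M`; for Hermitian `M`
nothing is lost by taking the real part. -/
def reQuadForm (x : ν → ℂ) : Matrix ν ν ℂ →ₗ[ℝ] ℝ where
  toFun M := (star x ⬝ᵥ (M *ᵥ x)).re
  map_add' M M' := by simp [Matrix.add_mulVec, dotProduct_add]
  map_smul' c M := by simp [Matrix.smul_mulVec, dotProduct_smul]

theorem reQuadForm_apply (x : ν → ℂ) (M : Matrix ν ν ℂ) :
    reQuadForm x M = (star x ⬝ᵥ (M *ᵥ x)).re := rfl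

theorem reQuadForm_mulVec (M : Matrix β β ℂ) (C : Matrix β ν ℂ) (x : ν → ℂ) :
    reQuadForm (C *ᵥ x) M = reQuadForm x (Cᴴ * M * C) := by
  simp only [reQuadForm_apply, Matrix.star_mulVec, ← Matrix.mulVec_mulVec,
    Matrix.dotProduct_mulVec, Matrix.vecMul_vecMul]

theorem reQuadForm_smul (M : Matrix ν ν ℂ) (c : ℂ) (x : ν → ℂ) :
    reQuadForm (c • x) M = ‖c‖ ^ 2 * reQuadForm x M := by
  rw [reQuadForm_apply, star_smul, mulVec_smul, smul_dotProduct, dotProduct_smul, smul_smul,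
    smul_eq_mul, Complex.star_def, Complex.conj_mul', ← Complex.ofReal_pow, Complex.re_ofReal_mul,
    reQuadForm_apply]

theorem reQuadForm_nonneg {M : Matrix ν ν ℂ} (hM : M.PosSemidef) (x : ν → ℂ) :
    0 ≤ reQuadForm x M := (Complex.nonneg_iff.1 (hM.dotProduct_mulVec_nonneg x)).1

theorem reQuadForm_pos {M : Matrix ν ν ℂ} (hM : M.PosDef) {x : ν → ℂ} (hx : x ≠ 0) :
    0 < reQuadForm x M := (Complex.pos_iff.1 (hM.dotProduct_mulVec_pos hx)).1

theorem reQuadForm_eq_zero_iff {M : Matrix ν ν ℂ} (hM : M.PosSemidef) {x : ν → ℂ} :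
    reQuadForm x M = 0 ↔ M *ᵥ x = 0 := by
  rw [← hM.dotProduct_mulVec_zero_iff, reQuadForm_apply, Complex.ext_iff,
    ← (Complex.nonneg_iff.1 (hM.dotProduct_mulVec_nonneg x)).2]
  simp

theorem reQuadForm_congr {M : Matrix ν ν ℂ} (hM : M.IsHermitian) {x y : ν → ℂ}
    (h : M *ᵥ x = M *ᵥ y) : reQuadForm x M = reQuadForm y M := by
  rw [reQuadForm_apply, reQuadForm_apply, h, dotProduct_mulVec, dotProduct_mulVec, ← hM.eq,
    ← star_mulVec, ← star_mulVec, h]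

end QuadraticForm

theorem exists_forall_norm_le_of_le_star_mul_mul_add {R : Type*} [CStarAlgebra R] [PartialOrder R]
    [StarOrderedRing R] {a : R} (ha : Tendsto (fun k : ℕ => a ^ k) atTop (𝓝 0)) :
    ∃ C : ℝ, 0 ≤ C ∧ ∀ p q : R, 0 ≤ p → p ≤ star a * p * a + q → ‖p‖ ≤ C * ‖q‖ := by
  obtain ⟨N, hN⟩ : ∃ N, ‖a ^ N‖ < 1 / 2 := (ha.norm.eventually_lt_const (by simp)).exists
  refine ⟨2 * ∑ i ∈ Finset.range N, ‖a ^ i‖ ^ 2, by positivity, fun p q hp hpq => ?_⟩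
  have hiter (k : ℕ) : p ≤ star (a ^ k) * p * a ^ k
      + ∑ i ∈ Finset.range k, star (a ^ i) * q * a ^ i := by
    induction k with
    | zero => simp
    | succ k ih =>
      refine ih.trans ((add_le_add_left (star_left_conjugate_le_conjugate hpq _) _).trans_eq ?_)
      rw [Finset.sum_range_succ, pow_succ', star_mul]
      noncomm_ring
  have hconj (x y : R) : ‖star x * y * x‖ ≤ ‖x‖ ^ 2 * ‖y‖ := by
    refine (norm_mul_le _ _).trans ((mul_le_mul_of_nonneg_right (norm_mul_le _ _)
      (norm_nonneg _)).trans_eq ?_)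
    rw [norm_star]
    ring
  have hp_le : ‖p‖ ≤ ‖a ^ N‖ ^ 2 * ‖p‖ + (∑ i ∈ Finset.range N, ‖a ^ i‖ ^ 2) * ‖q‖ := by
    refine (CStarAlgebra.norm_le_norm_of_nonneg_of_le hp (hiter N)).trans
      (norm_add_le_of_le (hconj _ _) ((norm_sum_le _ _).trans ?_))
    rw [Finset.sum_mul]
    exact Finset.sum_le_sum fun i _ => hconj _ _
  have hN_sq : ‖a ^ N‖ ^ 2 ≤ 1 / 2 := by nlinarith [norm_nonneg (a ^ N)]
  nlinarith [mul_le_mul_of_nonneg_right hN_sq (norm_nonneg p)]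

section Riccati

open scoped ComplexOrder

variable {ν β : Type*} [Fintype ν] [DecidableEq ν] [Fintype β] [DecidableEq β]
  {A : Matrix ν ν ℂ} {B : Matrix ν β ℂ} {ε : ℝ} {P : Matrix ν ν ℂ} {K : Matrix β ν ℂ}

/-- `P` is a positive semidefinite solution of the discrete algebraic Riccati equation with state
weight `ε I`, and `K` is the associated gain. The gain enters through the linear equation it
satisfies and not through an inverse, which makes the relation visibly closed in `(ε, P, K)`. -/
structure IsRiccatiPair (A : Matrix ν ν ℂ) (B : Matrix ν β ℂ) (ε : ℝ) (P : Matrix ν ν ℂ)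
    (K : Matrix β ν ℂ) : Prop where
  posSemidef : P.PosSemidef
  gain_eq : (1 + Bᴴ * P * B) * K = Bᴴ * P * A
  riccati_eq : Aᴴ * P * A - P - Aᴴ * P * B * K + ε • (1 : Matrix ν ν ℂ) = 0

namespace IsRiccatiPair

theorem one_add_posDef (h : IsRiccatiPair A B ε P K) : (1 + Bᴴ * P * B).PosDef :=
  Matrix.PosDef.one.add_posSemidef (h.posSemidef.conjTranspose_mul_mul_same B)

/-- Completion of the square in the feedback `U`; the optimal choice is `U = -K`. -/
theorem conjTranspose_add_mul_mul (h : IsRiccatiPair A B ε P K) (U : Matrix β ν ℂ) :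
    (A + B * U)ᴴ * P * (A + B * U) = P - ε • 1 - Uᴴ * U
      + (U + K)ᴴ * (1 + Bᴴ * P * B) * (U + K) := by
  have hgain : Kᴴ * (1 + Bᴴ * P * B) = Aᴴ * P * B := by
    have := congrArg conjTranspose h.gain_eq
    simpa [conjTranspose_mul, h.posSemidef.isHermitian.eq, Matrix.mul_assoc] using this
  have hsquare : (U + K)ᴴ * (1 + Bᴴ * P * B) * (U + K) = Uᴴ * U + Uᴴ * (Bᴴ * P * B) * U
      + Uᴴ * (Bᴴ * P * A) + Aᴴ * P * B * U + Aᴴ * P * B * K := by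
    rw [← h.gain_eq, ← hgain, conjTranspose_add]
    simp only [Matrix.add_mul, Matrix.mul_add, Matrix.mul_assoc, Matrix.one_mul]
    abel
  have hP : P - ε • 1 = Aᴴ * P * A - Aᴴ * P * B * K := by
    rw [← sub_eq_zero, ← neg_eq_zero, ← h.riccati_eq]
    abel
  rw [hsquare, hP, conjTranspose_add, conjTranspose_mul]
  simp only [Matrix.add_mul, Matrix.mul_add, Matrix.mul_assoc]
  abel

theorem conjTranspose_sub_mul_mul (h : IsRiccatiPair A B ε P K) :
    (A - B * K)ᴴ * P * (A - B * K) = P - ε • 1 - Kᴴ * K := by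
  simpa [← sub_eq_add_neg] using h.conjTranspose_add_mul_mul (-K)

open scoped MatrixOrder in
theorem le_conjTranspose_sub_mul_mul_add (h : IsRiccatiPair A B ε P K) (F : Matrix β ν ℂ) :
    P ≤ (A - B * F)ᴴ * P * (A - B * F) + (ε • 1 + Fᴴ * F) := by
  have hgap : (A - B * F)ᴴ * P * (A - B * F) + (ε • 1 + Fᴴ * F) - P
      = (-F + K)ᴴ * (1 + Bᴴ * P * B) * (-F + K) := by
    have hF := h.conjTranspose_add_mul_mul (-F)
    simp only [Matrix.mul_neg, ← sub_eq_add_neg, conjTranspose_neg, Matrix.neg_mul, neg_neg] at hF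
    rw [hF]
    abel
  rw [Matrix.le_iff, hgap]
  exact h.one_add_posDef.posSemidef.conjTranspose_mul_mul_same (-F + K)

open scoped MatrixOrder in
theorem conjTranspose_mul_self_le (h : IsRiccatiPair A B ε P K) (hε : 0 ≤ ε) : Kᴴ * K ≤ P := by
  have hgap : P - Kᴴ * K = (A - B * K)ᴴ * P * (A - B * K) + ε • 1 := by
    rw [h.conjTranspose_sub_mul_mul]
    abel
  rw [Matrix.le_iff, hgap]
  exact (h.posSemidef.conjTranspose_mul_mul_same (A - B * K)).add (Matrix.PosSemidef.one.smul hε)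

open scoped Matrix.Norms.L2Operator MatrixOrder in
theorem exists_forall_norm_le {F : Matrix β ν ℂ} (hF : SchurStableC (A - B * F)) :
    ∃ C : ℝ, ∀ ε ∈ Set.Icc (0 : ℝ) 1, ∀ P K, IsRiccatiPair A B ε P K → ‖P‖ ≤ C ∧ ‖K‖ ≤ C := by
  obtain ⟨C, hC0, hC⟩ := exists_forall_norm_le_of_le_star_mul_mul_add hF.tendsto_pow
  let c := C * (‖(1 : Matrix ν ν ℂ)‖ + ‖Fᴴ * F‖)
  refine ⟨max c (Real.sqrt c), fun ε hε P K h => ?_⟩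
  have hPc : ‖P‖ ≤ c := by
    refine (hC P _ h.posSemidef.nonneg (h.le_conjTranspose_sub_mul_mul_add F)).trans ?_
    refine mul_le_mul_of_nonneg_left ((norm_add_le _ _).trans ?_) hC0
    gcongr
    rw [norm_smul, Real.norm_of_nonneg hε.1]
    exact mul_le_of_le_one_left (norm_nonneg _) hε.2
  have hKP : ‖K‖ * ‖K‖ ≤ ‖P‖ := by
    rw [← l2_opNorm_conjTranspose_mul_self]
    exact CStarAlgebra.norm_le_norm_of_nonneg_of_le
      (posSemidef_conjTranspose_mul_self K).nonneg (h.conjTranspose_mul_self_le hε.1)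
  exact ⟨le_max_of_le_left hPc,
    le_max_of_le_right (Real.le_sqrt_of_sq_le (by rw [sq]; exact hKP.trans hPc))⟩

theorem reQuadForm_sub_mul_mulVec (h : IsRiccatiPair A B ε P K) (x : ν → ℂ) :
    reQuadForm ((A - B * K) *ᵥ x) P
      = reQuadForm x P - ε * reQuadForm x 1 - reQuadForm (K *ᵥ x) 1 := by
  rw [reQuadForm_mulVec, h.conjTranspose_sub_mul_mul, reQuadForm_mulVec, Matrix.mul_one, map_sub,
    map_sub, map_smul, smul_eq_mul]

theorem conjTranspose_mul_mul_sub (h : IsRiccatiPair A B ε P K) :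
    Aᴴ * P * (A - B * K) = P - ε • 1 := by
  rw [← sub_eq_zero, ← h.riccati_eq, Matrix.mul_sub, ← Matrix.mul_assoc]
  abel

theorem input_conjTranspose_mul_mul_sub (h : IsRiccatiPair A B ε P K) :
    Bᴴ * P * (A - B * K) = K := by
  rw [Matrix.mul_sub, ← h.gain_eq, Matrix.add_mul, Matrix.one_mul, ← Matrix.mul_assoc,
    add_sub_cancel_right]

theorem mulVec_sub_mul_mulVec_eq_zero (h : IsRiccatiPair A B ε P K) (hε : 0 ≤ ε) {x : ν → ℂ}
    (hx : P *ᵥ x = 0) : P *ᵥ ((A - B * K) *ᵥ x) = 0 := by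
  refine (reQuadForm_eq_zero_iff h.posSemidef).1 (le_antisymm ?_ (reQuadForm_nonneg h.posSemidef _))
  rw [h.reQuadForm_sub_mul_mulVec, (reQuadForm_eq_zero_iff h.posSemidef).2 hx]
  linarith [mul_nonneg hε (reQuadForm_nonneg PosSemidef.one x),
    reQuadForm_nonneg PosSemidef.one (K *ᵥ x)]

/-- A nonzero solution without state weight exhibits a mode on the unit circle which the input
cannot reach. -/
theorem exists_conjTranspose_mulVec_eq_smul (h : IsRiccatiPair A B 0 P K) (hP : P ≠ 0)
    (hA : ∀ μ ∈ spectrum ℂ A, ‖μ‖ ≤ 1) :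
    ∃ w ≠ 0, ∃ μ : ℂ, ‖μ‖ = 1 ∧ Aᴴ *ᵥ w = μ • w ∧ Bᴴ *ᵥ w = 0 := by
  obtain ⟨v, l, hPv, hPl⟩ := exists_apply_apply_eq_smul_of_ker_invariant
    (f := (A - B * K).mulVecLin) (p := P.mulVecLin)
    (fun h0 => hP ((LinearEquiv.map_eq_zero_iff toLin').1 h0))
    fun x => h.mulVec_sub_mul_mulVec_eq_zero le_rfl
  simp only [mulVecLin_apply] at hPv hPl
  have hAw : Aᴴ *ᵥ (l • P *ᵥ v) = P *ᵥ v := by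
    rw [← hPl, mulVec_mulVec, mulVec_mulVec, h.conjTranspose_mul_mul_sub, zero_smul, sub_zero]
  have hBw : Bᴴ *ᵥ (l • P *ᵥ v) = K *ᵥ v := by
    rw [← hPl, mulVec_mulVec, mulVec_mulVec, h.input_conjTranspose_mul_mul_sub]
  have hl0 : l ≠ 0 := by
    rintro rfl
    exact hPv (by simpa using hAw.symm)
  have hAw' : Aᴴ *ᵥ (P *ᵥ v) = l⁻¹ • P *ᵥ v := by
    rw [eq_inv_smul_iff₀ hl0, ← mulVec_smul, hAw]
  have hl_ge : 1 ≤ ‖l‖ := by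
    have := hA _ (star_mem_spectrum_of_conjTranspose_mulVec_eq_smul hPv hAw')
    rwa [norm_star, norm_inv, inv_le_one₀ (norm_pos_iff.2 hl0)] at this
  have hdecay : ‖l‖ ^ 2 * reQuadForm v P = reQuadForm v P - reQuadForm (K *ᵥ v) 1 := by
    rw [← reQuadForm_smul, ← reQuadForm_congr h.posSemidef.isHermitian
      (hPl.trans (mulVec_smul P l v).symm), h.reQuadForm_sub_mul_mulVec, zero_mul, sub_zero]
  have hv_pos : 0 < reQuadForm v P := (reQuadForm_nonneg h.posSemidef v).lt_of_ne'
    (mt (reQuadForm_eq_zero_iff h.posSemidef).1 hPv)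
  have hKv_nonneg := reQuadForm_nonneg PosSemidef.one (K *ᵥ v)
  have hl_sq : ‖l‖ ^ 2 ≤ 1 := (mul_le_iff_le_one_left hv_pos).1 (by linarith)
  have hl : ‖l‖ = 1 := le_antisymm ((sq_le_one_iff₀ (norm_nonneg l)).1 hl_sq) hl_ge
  have hKv : K *ᵥ v = 0 := by
    rw [← one_mulVec (K *ᵥ v), ← reQuadForm_eq_zero_iff PosSemidef.one]
    rw [hl] at hdecay
    linarith
  refine ⟨P *ᵥ v, hPv, l⁻¹, by rw [norm_inv, hl, inv_one], hAw', ?_⟩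
  rw [mulVec_smul, hKv] at hBw
  exact (smul_eq_zero_iff_right hl0).1 hBw

theorem eq_zero_of_zero (h : IsRiccatiPair A B 0 P K) (hA : ∀ μ ∈ spectrum ℂ A, ‖μ‖ ≤ 1)
    {F : Matrix β ν ℂ} (hF : SchurStableC (A - B * F)) : P = 0 ∧ K = 0 := by
  have hP : P = 0 := by
    by_contra hP
    obtain ⟨w, hw, μ, hμ, hAw, hBw⟩ := h.exists_conjTranspose_mulVec_eq_smul hP hA
    have hFw : (A - B * F)ᴴ *ᵥ w = μ • w := by
      rw [conjTranspose_sub, conjTranspose_mul, sub_mulVec, hAw, ← mulVec_mulVec, hBw, mulVec_zero,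
        sub_zero]
    have := hF _ (star_mem_spectrum_of_conjTranspose_mulVec_eq_smul hw hFw)
    rw [norm_star, hμ] at this
    exact lt_irrefl _ this
  exact ⟨hP, by simpa [hP] using h.gain_eq⟩

open scoped Matrix.Norms.L2Operator MatrixOrder in
theorem isClosed_setOf (A : Matrix ν ν ℂ) (B : Matrix ν β ℂ) :
    IsClosed {x : ℝ × Matrix ν ν ℂ × Matrix β ν ℂ | IsRiccatiPair A B x.1 x.2.1 x.2.2} := by
  have hset : {x : ℝ × Matrix ν ν ℂ × Matrix β ν ℂ | IsRiccatiPair A B x.1 x.2.1 x.2.2}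
      = {x | 0 ≤ x.2.1} ∩ {x | (1 + Bᴴ * x.2.1 * B) * x.2.2 = Bᴴ * x.2.1 * A}
        ∩ {x | Aᴴ * x.2.1 * A - x.2.1 - Aᴴ * x.2.1 * B * x.2.2 + x.1 • 1 = 0} :=
    Set.ext fun x => ⟨fun h => ⟨⟨h.posSemidef.nonneg, h.gain_eq⟩, h.riccati_eq⟩,
      fun h => ⟨h.1.1.posSemidef, h.1.2, h.2⟩⟩
  rw [hset]
  exact ((isClosed_le continuous_const (by fun_prop)).inter
    (isClosed_eq (by fun_prop) (by fun_prop))).inter (isClosed_eq (by fun_prop) (by fun_prop))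

/-- A solution away from `0` stays in a compact set for small weights, so that a limit point would
be a nonzero solution without state weight. -/
theorem eventually_mem_of_mem_nhds (hA : ∀ μ ∈ spectrum ℂ A, ‖μ‖ ≤ 1) {F : Matrix β ν ℂ}
    (hF : SchurStableC (A - B * F)) {U : Set (Matrix ν ν ℂ × Matrix β ν ℂ)} (hU : U ∈ 𝓝 0) :
    ∀ᶠ ε in 𝓝[>] (0 : ℝ), ∀ P K, IsRiccatiPair A B ε P K → (P, K) ∈ U := by
  open scoped Matrix.Norms.L2Operator in
  obtain ⟨C, hC⟩ := exists_forall_norm_le hF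
  have : ProperSpace (Matrix ν ν ℂ × Matrix β ν ℂ) := FiniteDimensional.proper ℂ _
  have hcompact : IsCompact (Metric.closedBall (0 : Matrix ν ν ℂ × Matrix β ν ℂ) C \ interior U) :=
    (isCompact_closedBall 0 C).diff isOpen_interior
  have hfar : ∀ᶠ ε in 𝓝 (0 : ℝ),
      ∀ x ∈ Metric.closedBall (0 : Matrix ν ν ℂ × Matrix β ν ℂ) C \ interior U,
        ¬ IsRiccatiPair A B ε x.1 x.2 := by
    refine hcompact.eventually_forall_of_forall_eventually fun x hx => ?_
    refine (isClosed_setOf A B).isOpen_compl.mem_nhds fun h => hx.2 ?_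
    obtain ⟨hP, hK⟩ := IsRiccatiPair.eq_zero_of_zero h hA hF
    rw [show x = 0 from Prod.ext hP hK]
    exact mem_interior_iff_mem_nhds.2 hU
  filter_upwards [nhdsWithin_le_nhds hfar, Ioc_mem_nhdsGT zero_lt_one] with ε hε hε1 P K h
  by_contra hPK
  obtain ⟨hP, hK⟩ := hC ε ⟨hε1.1.le, hε1.2⟩ P K h
  have hball : (P, K) ∈ Metric.closedBall 0 C := mem_closedBall_zero_iff.2 (max_le hP hK)
  exact hε (P, K) ⟨hball, fun hmem => hPK (interior_subset hmem)⟩ h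

end IsRiccatiPair

end Riccati

section LowGain

open scoped ComplexOrder

variable {ν β : Type*} [Fintype ν] [DecidableEq ν] [Fintype β] {A : Matrix ν ν ℂ}

theorem det_one_sub_smul_ne_zero (hA : ∀ μ ∈ spectrum ℂ A, ‖μ‖ ≤ 1) {w : ℂ} (hw : ‖w‖ ≤ 1)
    (hwA : w⁻¹ ∈ spectrum ℂ A → ‖w‖ ≠ 1) : (1 - w • A).det ≠ 0 := by
  intro hdet
  obtain ⟨v, hv, hwv⟩ := Matrix.exists_mulVec_eq_zero_iff.2 hdet
  rw [sub_mulVec, one_mulVec, sub_eq_zero, smul_mulVec] at hwv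
  have hw0 : w ≠ 0 := by
    rintro rfl
    exact hv (by simpa using hwv)
  have hmem : w⁻¹ ∈ spectrum ℂ A :=
    mem_spectrum_iff_exists_mulVec_eq_smul.2 ⟨v, hv, (eq_inv_smul_iff₀ hw0).2 hwv.symm⟩
  have hw_ge : 1 ≤ ‖w‖ := by
    have := hA _ hmem
    rwa [norm_inv, inv_le_one₀ (norm_pos_iff.2 hw0)] at this
  exact hwA hmem (le_antisymm hw hw_ge)

/-- In the variable `w = z⁻¹`, candidate modes outside the open unit disc range over a compact set,
on which a small gain cannot create a zero of the characteristic determinant. -/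
theorem eventually_forall_det_ne_zero (hA : ∀ μ ∈ spectrum ℂ A, ‖μ‖ ≤ 1) (B : Matrix ν β ℂ)
    {φ : ℂ → ℂ} (hφ : Continuous φ) {c : ℝ}
    (hc : ∀ z ∈ spectrum ℂ A, ‖z‖ = 1 → c < (φ z⁻¹).re) :
    ∀ᶠ K in 𝓝 (0 : Matrix β ν ℂ), ∀ w ∈ Metric.closedBall (0 : ℂ) 1 ∩ {w | (φ w).re ≤ c},
      (1 - w • A + (w * φ w) • (B * K)).det ≠ 0 := by
  have hclosed : IsClosed {w | (φ w).re ≤ c} :=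
    isClosed_le (Complex.continuous_re.comp hφ) continuous_const
  refine ((isCompact_closedBall 0 1).inter_right hclosed).eventually_forall_of_forall_eventually
    fun w hw => ?_
  have hcont : Continuous fun x : Matrix β ν ℂ × ℂ =>
      (1 - x.2 • A + (x.2 * φ x.2) • (B * x.1)).det := by fun_prop
  refine hcont.continuousAt.eventually_ne ?_
  rw [Matrix.mul_zero, smul_zero, add_zero]
  refine det_one_sub_smul_ne_zero hA (mem_closedBall_zero_iff.1 hw.1) fun hmem hw1 => ?_
  have := hc _ hmem (by rw [norm_inv, hw1, inv_one])
  rw [inv_inv] at this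
  exact this.not_ge hw.2

variable [DecidableEq β] {B : Matrix ν β ℂ}

open scoped Matrix.Norms.L2Operator MatrixOrder in
theorem reQuadForm_le_norm_mul {M : Matrix ν ν ℂ} (hM : M.IsHermitian) (x : ν → ℂ) :
    reQuadForm x M ≤ ‖M‖ * reQuadForm x 1 := by
  have hgap : (‖M‖ • (1 : Matrix ν ν ℂ) - M).PosSemidef := by
    rw [← Matrix.le_iff, ← Algebra.algebraMap_eq_smul_one]
    exact IsSelfAdjoint.le_algebraMap_norm_self hM
  simpa [sub_nonneg] using reQuadForm_nonneg hgap x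

namespace IsRiccatiPair

variable {ε : ℝ} {P : Matrix ν ν ℂ} {K : Matrix β ν ℂ}

theorem reQuadForm_sub_smul_mulVec (h : IsRiccatiPair A B ε P K) (μ : ℂ) (v : ν → ℂ) :
    reQuadForm ((A - μ • (B * K)) *ᵥ v) P = reQuadForm v P - ε * reQuadForm v 1
      + (1 - 2 * μ.re) * reQuadForm (K *ᵥ v) 1
      + ‖1 - μ‖ ^ 2 * reQuadForm (K *ᵥ v) (Bᴴ * P * B) := by
  have hfeedback : A - μ • (B * K) = A + B * (-μ • K) := by
    rw [neg_smul, Matrix.mul_neg, Matrix.mul_smul, sub_eq_add_neg]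
  have hdeviation : -μ • K + K = (1 - μ) • K := by rw [sub_smul, one_smul, neg_smul]; abel
  have hnorm : ‖1 - μ‖ ^ 2 = 1 - 2 * μ.re + ‖μ‖ ^ 2 := by
    rw [Complex.sq_norm, Complex.sq_norm, Complex.normSq_sub]
    simp
    ring
  have hinput : reQuadForm v ((-μ • K)ᴴ * (-μ • K)) = ‖μ‖ ^ 2 * reQuadForm (K *ᵥ v) 1 := by
    rw [← Matrix.mul_one (-μ • K)ᴴ, ← reQuadForm_mulVec, smul_mulVec, reQuadForm_smul, norm_neg]
  have hgap : reQuadForm v (((1 - μ) • K)ᴴ * (1 + Bᴴ * P * B) * ((1 - μ) • K))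
      = ‖1 - μ‖ ^ 2 * (reQuadForm (K *ᵥ v) 1 + reQuadForm (K *ᵥ v) (Bᴴ * P * B)) := by
    rw [← reQuadForm_mulVec, smul_mulVec, reQuadForm_smul, map_add]
  rw [reQuadForm_mulVec, hfeedback, h.conjTranspose_add_mul_mul, hdeviation, map_add, map_sub,
    map_sub, map_smul, smul_eq_mul, hinput, hgap, mul_add, hnorm]
  ring

open scoped Matrix.Norms.L2Operator in
theorem norm_lt_one_of_smul_eq (h : IsRiccatiPair A B ε P K) (hε : 0 < ε) {μ : ℂ}
    (hμ : ‖1 - μ‖ ^ 2 * ‖Bᴴ * P * B‖ ≤ 2 * μ.re - 1) {z : ℂ} {v : ν → ℂ} (hv : v ≠ 0)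
    (hz : z • v = (A - μ • (B * K)) *ᵥ v) : ‖z‖ < 1 := by
  have hBPB := h.posSemidef.conjTranspose_mul_mul_same B
  have hinput : ‖1 - μ‖ ^ 2 * reQuadForm (K *ᵥ v) (Bᴴ * P * B)
      ≤ (2 * μ.re - 1) * reQuadForm (K *ᵥ v) 1 := by
    refine (mul_le_mul_of_nonneg_left (reQuadForm_le_norm_mul hBPB.isHermitian _)
      (sq_nonneg _)).trans ?_
    rw [← mul_assoc]
    exact mul_le_mul_of_nonneg_right hμ (reQuadForm_nonneg PosSemidef.one _)
  have hdecay : ‖z‖ ^ 2 * reQuadForm v P < reQuadForm v P := by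
    rw [← reQuadForm_smul, hz, h.reQuadForm_sub_smul_mulVec]
    linarith [mul_pos hε (reQuadForm_pos PosDef.one hv)]
  by_contra! hz1
  exact hdecay.not_ge
    (le_mul_of_one_le_left (reQuadForm_nonneg h.posSemidef v) (one_le_pow₀ hz1))

end IsRiccatiPair

open scoped Matrix.Norms.L2Operator in
theorem eventually_forall_norm_lt_one (hA : ∀ μ ∈ spectrum ℂ A, ‖μ‖ ≤ 1) {F : Matrix β ν ℂ}
    (hF : SchurStableC (A - B * F)) {φ : ℂ → ℂ} (hφ : Continuous φ) {c : ℝ} (hc_half : 1 / 2 < c)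
    (hc : ∀ z ∈ spectrum ℂ A, ‖z‖ = 1 → c < (φ z⁻¹).re) :
    ∀ᶠ ε in 𝓝[>] (0 : ℝ), ∀ P K, IsRiccatiPair A B ε P K →
      ∀ (z : ℂ) (v : ν → ℂ), v ≠ 0 → z • v = (A - φ z⁻¹ • (B * K)) *ᵥ v → ‖z‖ < 1 := by
  obtain ⟨r, hr⟩ := (isCompact_closedBall (0 : ℂ) 1).exists_bound_of_continuousOn
    (f := fun w => ‖1 - φ w‖ ^ 2) (by fun_prop)
  have hsmall : ∀ᶠ P in 𝓝 (0 : Matrix ν ν ℂ), r * ‖Bᴴ * P * B‖ < 2 * c - 1 :=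
    Continuous.tendsto' (by fun_prop) 0 0 (by simp) |>.eventually_lt_const (by linarith)
  have hU := hsmall.prod_nhds (eventually_forall_det_ne_zero hA B hφ hc)
  filter_upwards [IsRiccatiPair.eventually_mem_of_mem_nhds hA hF hU, self_mem_nhdsWithin]
    with ε hε hε0 P K h z v hv hz
  obtain ⟨hP, hK⟩ := hε P K h
  by_contra! hz1
  have hz0 : z ≠ 0 := norm_pos_iff.1 (one_pos.trans_le hz1)
  have hw : z⁻¹ ∈ Metric.closedBall (0 : ℂ) 1 :=
    mem_closedBall_zero_iff.2 (by rw [norm_inv]; exact inv_le_one_of_one_le₀ hz1)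
  rcases le_or_gt (φ z⁻¹).re c with hle | hgt
  · refine hK z⁻¹ ⟨hw, hle⟩ (exists_mulVec_eq_zero_iff.1 ⟨v, hv, ?_⟩)
    have hz' : v = z⁻¹ • ((A - φ z⁻¹ • (B * K)) *ᵥ v) := (eq_inv_smul_iff₀ hz0).2 hz
    rw [sub_mulVec, smul_sub, smul_mulVec, smul_smul] at hz'
    rw [add_mulVec, sub_mulVec, one_mulVec, smul_mulVec, smul_mulVec]
    nth_rw 1 [hz']
    abel
  · refine (h.norm_lt_one_of_smul_eq hε0 ?_ hv hz).not_ge hz1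
    have hr' := (Real.norm_of_nonneg (sq_nonneg ‖1 - φ z⁻¹‖)).symm.trans_le (hr _ hw)
    linarith [mul_le_mul_of_nonneg_right hr' (norm_nonneg (Bᴴ * P * B))]

end LowGain

section Complexification

variable {ι ν β : Type*}

theorem map_ofReal_mul [Fintype ν] (M : Matrix ι ν ℝ) (M' : Matrix ν β ℝ) :
    (M * M').map Complex.ofReal = M.map Complex.ofReal * M'.map Complex.ofReal :=
  Matrix.map_mul (f := Complex.ofRealHom)

theorem map_ofReal_sub (M M' : Matrix ι ν ℝ) :
    (M - M').map Complex.ofReal = M.map Complex.ofReal - M'.map Complex.ofReal :=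
  Matrix.map_sub _ Complex.ofReal_sub M M'

theorem map_ofReal_transpose (M : Matrix ι ν ℝ) :
    Mᵀ.map Complex.ofReal = (M.map Complex.ofReal)ᴴ := by
  ext i j
  exact (Complex.conj_ofReal _).symm

theorem ofReal_comp_mulVec [Fintype ν] (M : Matrix ι ν ℝ) (v : ν → ℝ) :
    (fun i => ((M *ᵥ v) i : ℂ)) = M.map Complex.ofReal *ᵥ fun j => (v j : ℂ) :=
  funext (RingHom.map_mulVec Complex.ofRealHom M v)

open scoped ComplexOrder MatrixOrder in
theorem posSemidef_map_ofReal [Finite ν] {M : Matrix ν ν ℝ} (hM : M.PosSemidef) :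
    (M.map Complex.ofReal).PosSemidef := by
  have := Fintype.ofFinite ν
  obtain ⟨C, rfl⟩ := CStarAlgebra.nonneg_iff_eq_star_mul_self.1 hM.nonneg
  rw [Matrix.star_eq_conjTranspose, conjTranspose_eq_transpose_of_trivial, map_ofReal_mul,
    map_ofReal_transpose]
  exact Matrix.posSemidef_conjTranspose_mul_self _

theorem star_mem_spectrum_map_ofReal [Fintype ν] [DecidableEq ν] {M : Matrix ν ν ℝ} {z : ℂ}
    (hz : z ∈ spectrum ℂ (M.map Complex.ofReal)) : star z ∈ spectrum ℂ (M.map Complex.ofReal) := by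
  obtain ⟨v, hv, hMv⟩ := mem_spectrum_iff_exists_mulVec_eq_smul.1 hz
  refine mem_spectrum_iff_exists_mulVec_eq_smul.2 ⟨star v, star_ne_zero.2 hv, ?_⟩
  rw [← star_smul, ← hMv]
  ext i
  simp [mulVec, dotProduct]

end Complexification

section AgentModel

variable {n m : ℕ} {A : Matrix (Fin n) (Fin n) ℝ} {B : Matrix (Fin n) (Fin m) ℝ}

theorem one_add_mul_gainK {P : Matrix (Fin n) (Fin n) ℝ} (hP : P.PosSemidef) :
    (1 + Bᵀ * P * B) * gainK A B P = Bᵀ * P * A := by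
  have hpos : (1 + Bᴴ * P * B).PosDef :=
    Matrix.PosDef.one.add_posSemidef (hP.conjTranspose_mul_mul_same B)
  rw [conjTranspose_eq_transpose_of_trivial] at hpos
  exact Matrix.mul_nonsing_inv_cancel_left _ _ ((Matrix.isUnit_iff_isUnit_det _).1 hpos.isUnit)

theorem IsDARESol.isRiccatiPair {ε : ℝ} {P : Matrix (Fin n) (Fin n) ℝ} (h : IsDARESol A B ε P) :
    IsRiccatiPair (A.map Complex.ofReal) (B.map Complex.ofReal) ε (P.map Complex.ofReal)
      ((gainK A B P).map Complex.ofReal) where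
  posSemidef := posSemidef_map_ofReal h.1.posSemidef
  gain_eq := by
    rw [← Matrix.map_one _ Complex.ofReal_zero Complex.ofReal_one]
    simp only [← map_ofReal_transpose, ← map_ofReal_mul, ← one_add_mul_gainK h.1.posSemidef,
      ← Matrix.map_add _ Complex.ofReal_add]
  riccati_eq := by
    have hreal : Aᵀ * P * A - P - Aᵀ * P * B * gainK A B P
        + ε • (1 : Matrix (Fin n) (Fin n) ℝ) = 0 := by
      rw [gainK, ← Matrix.mul_assoc, h.2]
    rw [← Matrix.map_one _ Complex.ofReal_zero Complex.ofReal_one,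
      ← Matrix.map_zero _ Complex.ofReal_zero, ← hreal, Matrix.map_add _ Complex.ofReal_add,
      Matrix.map_smul _ ε fun c => by simp]
    simp only [← map_ofReal_transpose, ← map_ofReal_mul, ← map_ofReal_sub]

theorem omegaMax_nonneg (A : Matrix (Fin n) (Fin n) ℝ) : 0 ≤ omegaMax A := by
  unfold omegaMax
  split_ifs
  · exact le_rfl
  · exact Real.sSup_nonneg fun ω hω => hω.1.1

theorem abs_arg_le_omegaMax {z : ℂ} (hz : z ∈ spectrum ℂ (A.map Complex.ofReal)) (hz1 : ‖z‖ = 1) :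
    |z.arg| ≤ omegaMax A := by
  have hexp : Complex.exp (|z.arg| * Complex.I) ∈ spectrum ℂ (A.map Complex.ofReal) := by
    have hpolar : Complex.exp (z.arg * Complex.I) = z := by
      simpa [hz1] using Complex.norm_mul_exp_arg_mul_I z
    rcases abs_choice z.arg with h | h
    · rwa [h, hpolar]
    · have hconj : Complex.exp (((-z.arg : ℝ) : ℂ) * Complex.I) = star z := by
        conv_rhs => rw [← hpolar]
        rw [Complex.star_def, ← Complex.exp_conj]
        simp
      rw [h, hconj]
      exact star_mem_spectrum_map_ofReal hz
  have hunstable : ¬ SchurStable A := fun h => (h z hz).ne hz1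
  rw [omegaMax, if_neg hunstable]
  refine le_csSup ⟨Real.pi, fun ω hω => hω.1.2⟩ ⟨⟨abs_nonneg _, Complex.abs_arg_le_pi z⟩, ?_⟩
  rw [spectrum.mem_iff, Algebra.algebraMap_eq_smul_one, Matrix.isUnit_iff_isUnit_det,
    isUnit_iff_ne_zero, not_not] at hexp
  exact hexp

theorem re_inv_pow_of_norm_eq_one {z : ℂ} (hz : ‖z‖ = 1) (κ : ℕ) :
    (z⁻¹ ^ κ).re = Real.cos (κ * |z.arg|) := by
  have hpolar : z⁻¹ ^ κ = Complex.exp ((-(κ * z.arg) : ℝ) * Complex.I) := by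
    have : z = Complex.exp (z.arg * Complex.I) := by
      simpa [hz] using (Complex.norm_mul_exp_arg_mul_I z).symm
    nth_rw 1 [this]
    rw [← Complex.exp_neg, ← Complex.exp_nat_mul]
    congr 1
    push_cast
    ring
  rw [hpolar, Complex.exp_ofReal_mul_I_re, Real.cos_neg, ← Real.cos_abs, abs_mul, Nat.abs_cast]

theorem cos_le_re_inv_pow {κ κbar : ℕ} (hκ : κ ≤ κbar) (hκbar : κbar * omegaMax A ≤ Real.pi)
    {z : ℂ} (hz : z ∈ spectrum ℂ (A.map Complex.ofReal)) (hz1 : ‖z‖ = 1) :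
    Real.cos (κbar * omegaMax A) ≤ (z⁻¹ ^ κ).re := by
  rw [re_inv_pow_of_norm_eq_one hz1]
  refine Real.cos_le_cos_of_nonneg_of_le_pi (by positivity) hκbar ?_
  exact mul_le_mul (mod_cast hκ) (abs_arg_le_omegaMax hz hz1) (abs_nonneg _) (Nat.cast_nonneg _)

theorem cos_mul_omegaMax_pos {κbar : ℕ} (hκbar : κbar * omegaMax A < Real.pi / 2) :
    0 < Real.cos (κbar * omegaMax A) :=
  have hnonneg : 0 ≤ κbar * omegaMax A := mul_nonneg κbar.cast_nonneg (omegaMax_nonneg A)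
  Real.cos_pos_of_mem_Ioo ⟨by linarith [Real.pi_pos], hκbar⟩

theorem eventually_forall_delay_norm_lt_one (hstab : Stabilizable A B)
    (hA : EigInClosedUnitDisc A) {κbar : ℕ} (hκbar : κbar * omegaMax A < Real.pi / 2) {ρ : ℝ}
    (hρ : 1 / 2 < ρ * Real.cos (κbar * omegaMax A)) :
    ∀ᶠ ε in 𝓝[>] (0 : ℝ), ∀ κ ≤ κbar, ∀ P, IsDARESol A B ε P →
      ∀ (z : ℂ) (v : Fin n → ℂ), v ≠ 0 →
        z • v = (A.map Complex.ofReal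
          - z⁻¹ ^ κ • (ρ • (B * gainK A B P)).map Complex.ofReal) *ᵥ v → ‖z‖ < 1 := by
  obtain ⟨F, hF⟩ := hstab
  rw [SchurStable, map_ofReal_sub, map_ofReal_mul] at hF
  have hcos := cos_mul_omegaMax_pos hκbar
  obtain ⟨c, hc_half, hc⟩ := exists_between hρ
  have hρ0 : 0 < ρ := pos_of_mul_pos_left (by linarith) hcos.le
  have hdelay : ∀ κ ≤ κbar, ∀ z ∈ spectrum ℂ (A.map Complex.ofReal), ‖z‖ = 1 →
      c < ((fun w : ℂ => ρ * w ^ κ) z⁻¹).re := fun κ hκ z hz hz1 => by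
    rw [Complex.re_ofReal_mul]
    exact hc.trans_le (mul_le_mul_of_nonneg_left
      (cos_le_re_inv_pow hκ (by linarith [Real.pi_pos]) hz hz1) hρ0.le)
  refine (Filter.eventually_all_finite (Set.finite_Iic κbar)).2 fun κ hκ => ?_
  filter_upwards [eventually_forall_norm_lt_one hA hF (φ := fun w => ρ * w ^ κ)
    (by fun_prop) hc_half (hdelay κ hκ)] with ε hε P h z v hv hz
  refine hε _ _ h.isRiccatiPair z v hv ?_
  rwa [mul_comm, mul_smul, Complex.coe_smul, ← map_ofReal_mul,
    ← Matrix.map_smul _ ρ fun c => by simp]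

end AgentModel

section DelayedErrorDynamics

variable {ι ν : Type*} [Fintype ι] [Fintype ν]

/-- The solutions `(E, ξ)` of `E(k+1) = D E(k) Aᵀ` and
`ξ(k+κ+1) = A ξ(k+κ) - G (ξ(k) - E(k).row i)`, as a space of sequences: the observer errors of all
agents, one per row of `E`, together with the tracking error `ξ` of agent `i`, whose input is
delayed by `κ` steps. -/
def delayedErrorSolutions (D : Matrix ι ι ℂ) (A G : Matrix ν ν ℂ) (i : ι) (κ : ℕ) :
    Submodule ℂ (ℕ → Matrix ι ν ℂ × (ν → ℂ)) where
  carrier := {s | ∀ k, (s (k + 1)).1 = D * (s k).1 * Aᵀ ∧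
    (s (k + κ + 1)).2 = A *ᵥ (s (k + κ)).2 - G *ᵥ ((s k).2 - (s k).1.row i)}
  zero_mem' k := by
    refine ⟨by simp, ?_⟩
    change 0 = A *ᵥ 0 - G *ᵥ (0 - 0)
    simp
  add_mem' {s t} hs ht k := by
    refine ⟨?_, ?_⟩
    · simp [(hs k).1, (ht k).1, Matrix.mul_add, Matrix.add_mul]
    · change (s _).2 + (t _).2 = A *ᵥ ((s _).2 + (t _).2)
        - G *ᵥ ((s k).2 + (t k).2 - ((s k).1.row i + (t k).1.row i))
      rw [(hs k).2, (ht k).2, add_sub_add_comm, mulVec_add, mulVec_add]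
      abel
  smul_mem' c s hs k := by
    refine ⟨?_, ?_⟩
    · simp [(hs k).1]
    · change c • (s _).2 = A *ᵥ (c • (s _).2) - G *ᵥ (c • (s k).2 - c • (s k).1.row i)
      rw [(hs k).2, ← smul_sub, mulVec_smul, mulVec_smul, smul_sub]

namespace delayedErrorSolutions

variable {D : Matrix ι ι ℂ} {A G : Matrix ν ν ℂ} {i : ι} {κ : ℕ}

theorem shift_mem {s : ℕ → Matrix ι ν ℂ × (ν → ℂ)} (hs : s ∈ delayedErrorSolutions D A G i κ) :
    (fun k => s (k + 1)) ∈ delayedErrorSolutions D A G i κ := fun k =>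
  ⟨(hs (k + 1)).1, by simpa only [add_right_comm] using (hs (k + 1)).2⟩

theorem eq_zero_of_forall_lt_eq_zero {s : ℕ → Matrix ι ν ℂ × (ν → ℂ)}
    (hs : s ∈ delayedErrorSolutions D A G i κ) (h0 : ∀ k < κ + 1, s k = 0) : s = 0 := by
  funext k
  induction k using Nat.strong_induction_on with
  | _ k ih =>
    rcases lt_or_ge k (κ + 1) with hk | hk
    · exact h0 k hk
    · obtain ⟨l, rfl⟩ := Nat.exists_eq_add_of_le' hk
      have hl : s l = 0 := ih l (by omega)
      have hlκ : s (l + κ) = 0 := ih (l + κ) (by omega)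
      refine Prod.ext ?_ ?_
      · rw [← add_assoc, (hs (l + κ)).1, hlκ]
        simp
      · rw [← add_assoc, (hs l).2, hlκ, hl]
        change A *ᵥ 0 - G *ᵥ (0 - 0) = 0
        simp

instance : FiniteDimensional ℂ (delayedErrorSolutions D A G i κ) :=
  finiteDimensional_of_forall_lt_eq_zero _ (κ + 1) fun _ => eq_zero_of_forall_lt_eq_zero

variable [DecidableEq ι] [DecidableEq ν]

/-- The dynamics is block triangular: a mode either has a nonzero observer error, and then is an
eigenvalue of `D ⊗ A`, or it is a mode of the delayed loop driven by the tracking error alone. -/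
theorem norm_lt_one_of_pow_smul_mem (hD : SchurStableC D) (hA : ∀ μ ∈ spectrum ℂ A, ‖μ‖ ≤ 1)
    (hG : ∀ (z : ℂ) (v : ν → ℂ), v ≠ 0 → z • v = (A - z⁻¹ ^ κ • G) *ᵥ v → ‖z‖ < 1) {z : ℂ}
    {v : Matrix ι ν ℂ × (ν → ℂ)} (hv : v ≠ 0)
    (h : (fun k => z ^ k • v) ∈ delayedErrorSolutions D A G i κ) : ‖z‖ < 1 := by
  obtain ⟨E, ξ⟩ := v
  by_cases hE : E = 0
  · subst hE
    have hξ : ξ ≠ 0 := fun h0 => hv (by rw [h0]; rfl)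
    rcases eq_or_ne z 0 with rfl | hz
    · simp
    have hκ : z ^ (κ + 1) • ξ = A *ᵥ (z ^ κ • ξ) - G *ᵥ ξ := by
      have := (h 0).2
      simp only [zero_add, pow_zero, one_smul, Prod.smul_snd] at this
      exact this.trans (congrArg (fun w => A *ᵥ (z ^ κ • ξ) - G *ᵥ w) (sub_zero ξ))
    refine hG z ξ hξ (smul_right_injective _ (pow_ne_zero κ hz) ?_)
    change z ^ κ • z • ξ = z ^ κ • ((A - z⁻¹ ^ κ • G) *ᵥ ξ)
    rw [smul_smul, ← pow_succ, hκ, sub_mulVec, smul_mulVec, smul_sub, smul_smul, ← mul_pow,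
      mul_inv_cancel₀ hz, one_pow, one_smul, mulVec_smul]
  · obtain ⟨α, hα, β, hβ, rfl⟩ := exists_mul_eq_of_mul_mul_transpose_eq_smul (D := D) (A := A)
      (z := z) hE (by simpa using (h 0).1.symm)
    rw [norm_mul]
    exact mul_lt_one_of_nonneg_of_lt_one_left (norm_nonneg α) (hD α hα) (hA β hβ)

theorem tendsto_zero (hD : SchurStableC D) (hA : ∀ μ ∈ spectrum ℂ A, ‖μ‖ ≤ 1)
    (hG : ∀ (z : ℂ) (v : ν → ℂ), v ≠ 0 → z • v = (A - z⁻¹ ^ κ • G) *ᵥ v → ‖z‖ < 1)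
    {s : ℕ → Matrix ι ν ℂ × (ν → ℂ)} (hs : s ∈ delayedErrorSolutions D A G i κ) :
    Tendsto s atTop (𝓝 0) :=
  tendsto_zero_of_shift_invariant _ (fun _ => shift_mem)
    (fun _ _ => norm_lt_one_of_pow_smul_mem hD hA hG) hs

end delayedErrorSolutions

theorem tendsto_zero_of_delayed_error_recursion [DecidableEq ι] [DecidableEq ν] {D : Matrix ι ι ℝ}
    {A G : Matrix ν ν ℝ} {i : ι} {κ : ℕ} (hD : SchurStable D) (hA : EigInClosedUnitDisc A)
    (hG : ∀ (z : ℂ) (v : ν → ℂ), v ≠ 0 →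
      z • v = (A.map Complex.ofReal - z⁻¹ ^ κ • G.map Complex.ofReal) *ᵥ v → ‖z‖ < 1)
    {E : ℕ → Matrix ι ν ℝ} {ξ : ℕ → ν → ℝ} (hE : ∀ k, E (k + 1) = D * E k * Aᵀ)
    (hξ : ∀ k, ξ (k + κ + 1) = A *ᵥ ξ (k + κ) - G *ᵥ (ξ k - (E k).row i)) :
    Tendsto ξ atTop (𝓝 0) := by
  have hs : (fun k => ((E k).map Complex.ofReal, fun j => (ξ k j : ℂ))) ∈ delayedErrorSolutions
      (D.map Complex.ofReal) (A.map Complex.ofReal) (G.map Complex.ofReal) i κ := by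
    refine fun k => ⟨?_, ?_⟩
    · simp only [hE, map_ofReal_mul]
      rfl
    · simp only [hξ, Pi.sub_apply, Complex.ofReal_sub]
      change (fun j => ((A *ᵥ ξ (k + κ)) j : ℂ)) - (fun j => ((G *ᵥ (ξ k - (E k).row i)) j : ℂ)) = _
      rw [ofReal_comp_mulVec, ofReal_comp_mulVec]
      simp only [Pi.sub_apply, Complex.ofReal_sub]
      rfl
  have hlim := (continuous_snd.tendsto _).comp (delayedErrorSolutions.tendsto_zero hD hA hG hs)
  rw [tendsto_pi_nhds] at hlim ⊢
  exact fun j => (Complex.continuous_re.tendsto 0).comp (hlim j)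

end DelayedErrorDynamics

section Network

variable {N : ℕ} {a : Fin N → Fin N → ℝ} {ι : Fin N → ℝ}

theorem dbarM_mul_row {ν : Type*} (hd : ∀ i, 2 + dIn a i ≠ 0) (E : Matrix (Fin N) ν ℝ)
    (i : Fin N) :
    (DbarM a ι * E).row i = E.row i - (2 + dIn a i)⁻¹ • ∑ j, lapLbar a ι i j • E.row j := by
  have hinv : ((2 : ℝ) • (1 : Matrix (Fin N) (Fin N) ℝ) + Matrix.diagonal (dIn a))⁻¹
      = Matrix.diagonal fun i => (2 + dIn a i)⁻¹ := by
    refine Matrix.inv_eq_right_inv ?_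
    rw [Matrix.smul_one_eq_diagonal, Matrix.diagonal_add, Matrix.diagonal_mul_diagonal,
      ← Matrix.diagonal_one]
    exact congrArg Matrix.diagonal (funext fun i => mul_inv_cancel₀ (hd i))
  ext l
  rw [row_apply, DbarM, hinv, Matrix.sub_mul, Matrix.one_mul, Matrix.mul_assoc, Matrix.sub_apply,
    Matrix.diagonal_mul, Matrix.mul_apply]
  simp

theorem sum_smul_sub_add_smul_sub {V : Type*} [AddCommGroup V] [Module ℝ V] {i : Fin N}
    (ha : a i i = 0) (x : Fin N → V) (r : V) :
    ∑ j, a i j • (x i - x j) + ι i • (x i - r) = ∑ j, lapLbar a ι i j • (x j - r) := by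
  have hentry (j : Fin N) : lapLbar a ι i j • (x j - r)
      = (if i = j then (dIn a i + ι i) • (x i - r) else 0) - a i j • (x j - r) := by
    rcases eq_or_ne i j with rfl | hij
    · simp [lapLbar, lapL, ha]
    · simp [lapLbar, lapL, hij]
  have hdiff (j : Fin N) : a i j • (x i - x j) = a i j • (x i - r) - a i j • (x j - r) := by
    rw [← smul_sub, sub_sub_sub_cancel_right]
  simp only [hentry, hdiff, Finset.sum_sub_distrib, Finset.sum_ite_eq, Finset.mem_univ, if_true,
    add_smul, dIn, Finset.sum_smul]
  abel

/-- The observer coupling turns the errors `x_i - x_r - χ_i` into an autonomous recursion, in which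
the delayed inputs cancel. -/
theorem dbarM_mul_mul_transpose_row {n : ℕ} (hd : ∀ i, 2 + dIn a i ≠ 0) {i : Fin N}
    (ha : a i i = 0) (A : Matrix (Fin n) (Fin n) ℝ) (x χ : Fin N → Fin n → ℝ) (r : Fin n → ℝ) :
    (DbarM a ι * Matrix.of (fun j => x j - r - χ j) * Aᵀ).row i = A *ᵥ (x i - r - χ i)
      - (A *ᵥ ((2 + dIn a i)⁻¹ • (∑ j, a i j • (x i - x j) + ι i • (x i - r)))
        - A *ᵥ ((2 + dIn a i)⁻¹ • ∑ j, lapLbar a ι i j • χ j)) := by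
  have hrow (M : Matrix (Fin N) (Fin n) ℝ) : (M * Aᵀ).row i = A *ᵥ M.row i :=
    vecMul_transpose A (M i)
  rw [hrow, dbarM_mul_row hd, sum_smul_sub_add_smul_sub ha, ← mulVec_sub, ← mulVec_sub,
    ← smul_sub, ← Finset.sum_sub_distrib]
  simp only [← smul_sub, of_row]

end Network

theorem regulated_sync_fullstate_general {n m : ℕ}
    (A : Matrix (Fin n) (Fin n) ℝ) (B : Matrix (Fin n) (Fin m) ℝ)
    (hstab : Stabilizable A B) (hA : EigInClosedUnitDisc A)
    (κbar : ℕ) (hκbar : (κbar : ℝ) * omegaMax A < Real.pi / 2)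
    (ρ : ℝ) (hρ : 1 / 2 < ρ * Real.cos (κbar * omegaMax A)) :
    ∃ εstar > (0 : ℝ), ∀ ε ∈ Set.Ioc (0 : ℝ) εstar, ∀ P, IsDARESol A B ε P →
      ∀ (N : ℕ) (a : Fin N → Fin N → ℝ) (ι : Fin N → ℝ),
        (∀ i, 2 + dIn a i ≠ 0) → (∀ i, a i i = 0) →
        SchurStable (DbarM a ι) →
        ∀ κ : Fin N → ℕ, (∀ i, κ i ≤ κbar) →
        ∀ xr : ℕ → Fin n → ℝ, (∀ k : ℕ, xr (k + 1) = A.mulVec (xr k)) →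
        ∀ (x χ : Fin N → ℕ → Fin n → ℝ) (u : Fin N → ℕ → Fin m → ℝ),
        (∀ i k, x i (k + κbar + 1)
            = A.mulVec (x i (k + κbar)) + B.mulVec (u i (k + κbar - κ i))) →
        (∀ i k, χ i (k + κbar + 1)
            = A.mulVec (χ i (k + κbar)) + B.mulVec (u i (k + κbar - κ i))
              + A.mulVec ((2 + dIn a i)⁻¹ •
                  (∑ j, a i j • (x i (k + κbar) - x j (k + κbar))
                    + ι i • (x i (k + κbar) - xr k)))
              - A.mulVec ((2 + dIn a i)⁻¹ • ∑ j, lapLbar a ι i j • χ j (k + κbar))) →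
        (∀ i k, u i k = -(ρ • (gainK A B P).mulVec (χ i k))) →
        ∀ i, Tendsto (fun k => x i (k + κbar) - xr k) atTop (nhds 0) := by
  obtain ⟨εstar, hεstar, hmodes⟩ := mem_nhdsGT_iff_exists_Ioc_subset.1
    (eventually_forall_delay_norm_lt_one hstab hA hκbar hρ)
  refine ⟨εstar, hεstar, fun ε hε P hP N a ι hd ha hD κ hκ xr hxr x χ u hx hχ hu i => ?_⟩
  have htracking (i k) : x i (k + 1 + κbar) - xr (k + 1)
      = A *ᵥ (x i (k + κbar) - xr k) + B *ᵥ u i (k + κbar - κ i) := by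
    rw [add_right_comm, hx, hxr, mulVec_sub]
    abel
  refine tendsto_zero_of_delayed_error_recursion (i := i) hD hA (hmodes hε (κ i) (hκ i) P hP)
    (E := fun k => Matrix.of fun j => x j (k + κbar) - xr k - χ j (k + κbar))
    (fun k => ext_row fun j => ?_) fun k => ?_
  · rw [dbarM_mul_mul_transpose_row hd (ha j), mulVec_sub, of_row, htracking, add_right_comm k,
      hχ]
    abel
  · have hinput : k + κ i + κbar - κ i = k + κbar := by omega
    have hχ_eq : x i (k + κbar) - xr k - (x i (k + κbar) - xr k - χ i (k + κbar))
        = χ i (k + κbar) := sub_sub_cancel _ _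
    rw [htracking, hinput, hu, of_row, hχ_eq, smul_mulVec, ← mulVec_mulVec, mulVec_neg,
      mulVec_smul, ← sub_eq_add_neg]

/-- Theorem 1 of the paper: scalable regulated state synchronization with
full-state coupling in the presence of unknown non-uniform input delays. If
`κ̄·ω_max < π/2`, there exist `ρ > 1/2` and `ε* > 0`, depending only on the agent model
and `κ̄`, such that for every `ε ∈ (0, ε*]`, every network (with `D̄` Schur stable),
all delays `κ_i ∈ {0,…,κ̄}`, and every solution of the closed-loop system,
`x_i(k) − x_r(k) → 0` for every agent `i`. Time is shifted by `κbar`, so actual time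
`k` corresponds to index `k + κbar` for the agent signals, with arbitrary initial data. -/
theorem regulated_sync_fullstate {n m : ℕ}
    (A : Matrix (Fin n) (Fin n) ℝ) (B : Matrix (Fin n) (Fin m) ℝ)
    (hstab : Stabilizable A B) (hA : EigInClosedUnitDisc A)
    (κbar : ℕ) (hκbar : (κbar : ℝ) * omegaMax A < Real.pi / 2)
    (P : ℝ → Matrix (Fin n) (Fin n) ℝ)
    (hP : ∀ ε > (0 : ℝ), IsDARESol A B ε (P ε)) :
    ∃ ρ : ℝ, 1 / 2 < ρ ∧ ∃ εstar > (0 : ℝ), ∀ ε ∈ Set.Ioc (0 : ℝ) εstar,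
      ∀ (N : ℕ) (a : Fin N → Fin N → ℝ) (ι : Fin N → ℝ),
        (∀ i j, 0 ≤ a i j) → (∀ i, a i i = 0) → (∀ i, ι i = 0 ∨ ι i = 1) →
        SchurStable (DbarM a ι) →
        ∀ κ : Fin N → ℕ, (∀ i, κ i ≤ κbar) →
        ∀ xr : ℕ → Fin n → ℝ, (∀ k : ℕ, xr (k + 1) = A.mulVec (xr k)) →
        ∀ (x χ : Fin N → ℕ → Fin n → ℝ) (u : Fin N → ℕ → Fin m → ℝ),
        (∀ i k, x i (k + κbar + 1)
            = A.mulVec (x i (k + κbar)) + B.mulVec (u i (k + κbar - κ i))) →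
        (∀ i k, χ i (k + κbar + 1)
            = A.mulVec (χ i (k + κbar)) + B.mulVec (u i (k + κbar - κ i))
              + A.mulVec ((2 + dIn a i)⁻¹ •
                  (∑ j, a i j • (x i (k + κbar) - x j (k + κbar))
                    + ι i • (x i (k + κbar) - xr k)))
              - A.mulVec ((2 + dIn a i)⁻¹ • ∑ j, lapLbar a ι i j • χ j (k + κbar))) →
        (∀ i k, u i k = -(ρ • (gainK A B (P ε)).mulVec (χ i k))) →
        ∀ i, Tendsto (fun k => x i (k + κbar) - xr k) atTop (nhds 0) := by
  have hcos := cos_mul_omegaMax_pos hκbar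
  obtain ⟨εstar, hεstar, hsync⟩ := regulated_sync_fullstate_general A B hstab hA κbar hκbar
    (Real.cos (κbar * omegaMax A))⁻¹ (by rw [inv_mul_cancel₀ hcos.ne']; norm_num)
  have hρ : 1 ≤ (Real.cos (κbar * omegaMax A))⁻¹ := (one_le_inv₀ hcos).2 (Real.cos_le_one _)
  refine ⟨_, by linarith, εstar, hεstar, fun ε hε N a ι ha_nonneg ha _ =>
    hsync ε hε (P ε) (hP ε hε.1) N a ι (fun i => ?_) ha⟩
  have hdIn : 0 ≤ dIn a i := Finset.sum_nonneg fun j _ => ha_nonneg i j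
  positivity

end
end

section
/- Let A ∈ ℝ^{n×n}, B ∈ ℝ^{n×m} with (A,B) stabilizable and all eigenvalues of A in the closed unit disc. For δ > 0 let P_δ be the unique positive definite solution of the discrete algebraic Riccati equation P_δ = Aᵀ P_δ A + δ I − Aᵀ P_δ B (Bᵀ P_δ B + I)^{−1} Bᵀ P_δ A, let F_δ := −(Bᵀ P_δ B + I)^{−1} Bᵀ P_δ A, and let γ_δ := λ_max(Bᵀ P_δ B). Then for every λ ∈ ℂ satisfying | λ − (1 + 1/γ_δ) | < √(1 + γ_δ)/γ_δ, the matrix A + λ B F_δ is Schur stable. -/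
open Matrix Filter Topology Kronecker
open scoped Classical

noncomputable section

/-!
Put `G = A + B F` for the Riccati gain `F`. The gain equation reads `Bᴴ P G = -F` and the Riccati
equation reads `Aᴴ P G = P - Q`. Expanding around `G`, for every scalar `lam`,
`P - (A + lam B F)ᴴ P (A + lam B F) = Q + Fᴴ ((2 Re lam - 1) I - |lam - 1|² Bᴴ P B) F`.
The disc in the theorem is exactly where `|lam - 1|² γ < 2 Re lam - 1`, so there the second summand
is positive semidefinite and `P` is a Lyapunov function for `A + lam B F`.
-/

open scoped ComplexOrder

section BaseChange

variable {κ k K L F : Type*} [Fintype κ] [DecidableEq κ] [FunLike F K L]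

theorem nonsing_inv_map [Field K] [Field L] [RingHomClass F K L] (f : F) (M : Matrix κ κ K) :
    M⁻¹.map f = (M.map f)⁻¹ := by
  have hdet : f M.det = (M.map f).det := (f : K →+* L).map_det M
  have hadj : M.adjugate.map f = (M.map f).adjugate := (f : K →+* L).map_adjugate M
  rw [inv_def, inv_def, Ring.inverse_eq_inv', Ring.inverse_eq_inv', ← hdet, ← hadj, ← map_inv₀]
  exact Matrix.map_smul' f _ _ (map_mul f)

theorem spectrum_matrix_map [CommSemiring k] [Field K] [Field L] [Algebra k K] [Algebra k L]
    [AlgHomClass F k K L] (f : F) (M : Matrix κ κ K) : spectrum k (M.map f) = spectrum k M := by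
  ext r
  have hdet : (algebraMap k (Matrix κ κ L) r - M.map f).det =
      f (algebraMap k (Matrix κ κ K) r - M).det := by
    let g : K →ₐ[k] L := AlgHomClass.toAlgHom f
    calc (algebraMap k (Matrix κ κ L) r - M.map f).det
        = (g.mapMatrix (algebraMap k (Matrix κ κ K) r) - g.mapMatrix M).det := by
          rw [AlgHom.commutes]; rfl
      _ = f (algebraMap k (Matrix κ κ K) r - M).det := by
          rw [← map_sub]; exact ((g : K →+* L).map_det _).symm
  rw [spectrum.mem_iff, spectrum.mem_iff, isUnit_iff_isUnit_det, hdet, isUnit_map_iff f,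
    isUnit_iff_isUnit_det]

end BaseChange

section PositivityBaseChange

variable {κ K L F : Type*} [Finite κ] [RCLike K] [RCLike L] [FunLike F K L] [AlgHomClass F ℝ K L]
  [StarHomClass F K L]

theorem posSemidef_map (f : F) {M : Matrix κ κ K} (hM : M.PosSemidef) :
    (M.map f).PosSemidef := by
  classical
  cases nonempty_fintype κ
  have hherm : (M.map f).IsHermitian := hM.isHermitian.map f (map_star f)
  refine hherm.posSemidef_iff_eigenvalues_nonneg.2 fun i => ?_
  have hmem : hherm.eigenvalues i ∈ spectrum ℝ M :=
    spectrum_matrix_map f M ▸ hherm.eigenvalues_mem_spectrum_real i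
  rw [hM.isHermitian.spectrum_real_eq_range_eigenvalues] at hmem
  obtain ⟨j, hj⟩ := hmem
  exact hj ▸ hM.eigenvalues_nonneg j

theorem posDef_map (f : F) {M : Matrix κ κ K} (hM : M.PosDef) : (M.map f).PosDef := by
  classical
  cases nonempty_fintype κ
  exact (posSemidef_map f hM.posSemidef).posDef_iff_isUnit.2 <|
    hM.isUnit.map ((f : K →ₐ[ℝ] L).mapMatrix : Matrix κ κ K →ₐ[ℝ] Matrix κ κ L)

end PositivityBaseChange

section Riccati

variable {ι κ R : Type*} [Fintype ι] [Fintype κ] [DecidableEq κ] [CommRing R] [StarRing R]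
  {A P Q : Matrix ι ι R} {B : Matrix ι κ R}

/-- `P` satisfies the discrete algebraic Riccati equation with state weight `Q` and input
weight `1`; positivity of `P` is not part of the notion. -/
def IsRiccatiSolution (A : Matrix ι ι R) (B : Matrix ι κ R) (Q P : Matrix ι ι R) : Prop :=
  P = Aᴴ * P * A + Q - Aᴴ * P * B * (Bᴴ * P * B + 1)⁻¹ * (Bᴴ * P * A)

/-- The linear-quadratic state feedback `u = F x` associated with `P`, with the sign chosen so
that the closed-loop matrix is `A + B F`. -/
def riccatiGain (A : Matrix ι ι R) (B : Matrix ι κ R) (P : Matrix ι ι R) : Matrix κ ι R :=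
  -((Bᴴ * P * B + 1)⁻¹ * (Bᴴ * P * A))

theorem input_conjTranspose_mul_mul_closedLoop (hR : IsUnit (Bᴴ * P * B + 1)) :
    Bᴴ * P * (A + B * riccatiGain A B P) = -riccatiGain A B P := by
  have hgain : (Bᴴ * P * B + 1) * riccatiGain A B P = -(Bᴴ * P * A) := by
    rw [riccatiGain, Matrix.mul_neg,
      mul_nonsing_inv_cancel_left _ _ ((isUnit_iff_isUnit_det _).1 hR)]
  rw [Matrix.add_mul, Matrix.one_mul] at hgain
  rw [Matrix.mul_add, ← Matrix.mul_assoc, eq_sub_of_add_eq hgain]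
  abel

theorem IsRiccatiSolution.conjTranspose_mul_mul_closedLoop
    (h : IsRiccatiSolution A B Q P) : Aᴴ * P * (A + B * riccatiGain A B P) = P - Q := by
  nth_rewrite 3 [h]
  simp only [riccatiGain, Matrix.mul_add, Matrix.mul_neg, Matrix.mul_assoc]
  abel

theorem IsRiccatiSolution.closedLoop_conjTranspose_mul_mul (h : IsRiccatiSolution A B Q P)
    (hR : IsUnit (Bᴴ * P * B + 1)) :
    (A + B * riccatiGain A B P)ᴴ * P * (A + B * riccatiGain A B P) =
      P - Q - (riccatiGain A B P)ᴴ * riccatiGain A B P := by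
  set F := riccatiGain A B P with hF
  calc (A + B * F)ᴴ * P * (A + B * F)
      = Aᴴ * P * (A + B * F) + Fᴴ * (Bᴴ * P * (A + B * F)) := by
        simp only [conjTranspose_add, conjTranspose_mul, Matrix.add_mul, Matrix.mul_assoc]
    _ = P - Q - Fᴴ * F := by
        rw [hF, h.conjTranspose_mul_mul_closedLoop,
          input_conjTranspose_mul_mul_closedLoop hR, Matrix.mul_neg, ← sub_eq_add_neg]

theorem IsRiccatiSolution.sub_conjTranspose_mul_mul (h : IsRiccatiSolution A B Q P)
    (hP : P.IsHermitian) (hR : IsUnit (Bᴴ * P * B + 1)) (lam : R) :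
    P - (A + lam • (B * riccatiGain A B P))ᴴ * P * (A + lam • (B * riccatiGain A B P)) =
      Q + (riccatiGain A B P)ᴴ *
        ((lam + star lam - 1) • (1 : Matrix κ κ R) -
          (star (lam - 1) * (lam - 1)) • (Bᴴ * P * B)) * riccatiGain A B P := by
  have hGG := h.closedLoop_conjTranspose_mul_mul hR
  have hBG := input_conjTranspose_mul_mul_closedLoop (A := A) hR
  set F := riccatiGain A B P
  set G := A + B * F with hG
  have hGB : Gᴴ * P * B = -Fᴴ := by
    simpa [hP.eq, Matrix.mul_assoc] using congrArg conjTranspose hBG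
  have hN : A + lam • (B * F) = G + (lam - 1) • (B * F) := by rw [hG]; module
  have hexpand : (A + lam • (B * F))ᴴ * P * (A + lam • (B * F)) =
      Gᴴ * P * G + (lam - 1) • (Gᴴ * P * B * F) + star (lam - 1) • (Fᴴ * (Bᴴ * P * G))
        + (star (lam - 1) * (lam - 1)) • (Fᴴ * (Bᴴ * P * B) * F) := by
    rw [hN, conjTranspose_add, conjTranspose_smul, conjTranspose_mul]
    simp only [Matrix.add_mul, Matrix.mul_add, Matrix.smul_mul, Matrix.mul_smul, Matrix.mul_assoc]
    module
  rw [hexpand, hGG, hGB, hBG]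
  simp only [Matrix.mul_sub, Matrix.sub_mul, Matrix.mul_smul, Matrix.smul_mul, Matrix.mul_one,
    Matrix.mul_neg, Matrix.neg_mul, star_sub, star_one]
  module

end Riccati

section RiccatiBaseChange

variable {ι κ K L F : Type*} [Fintype ι] [Fintype κ] [DecidableEq κ] [Field K] [StarRing K]
  [Field L] [StarRing L] [FunLike F K L] [RingHomClass F K L] [StarHomClass F K L]

theorem IsRiccatiSolution.map {A P Q : Matrix ι ι K} {B : Matrix ι κ K}
    (h : IsRiccatiSolution A B Q P) (f : F) :
    IsRiccatiSolution (A.map f) (B.map f) (Q.map f) (P.map f) := by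
  have hmap := congrArg (Matrix.map · f) h
  simpa only [IsRiccatiSolution, Matrix.map_sub _ (map_sub f), Matrix.map_add _ (map_add f),
    Matrix.map_mul, nonsing_inv_map, conjTranspose_map f (map_star f),
    Matrix.map_one f (map_zero f) (map_one f)] using hmap

theorem riccatiGain_map (f : F) (A P : Matrix ι ι K) (B : Matrix ι κ K) :
    riccatiGain (A.map f) (B.map f) (P.map f) = (riccatiGain A B P).map f := by
  simp only [riccatiGain, Matrix.map_neg _ (map_neg f), Matrix.map_add _ (map_add f),
    Matrix.map_mul, nonsing_inv_map, conjTranspose_map f (map_star f),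
    Matrix.map_one f (map_zero f) (map_one f)]

end RiccatiBaseChange

open scoped MatrixOrder in
theorem posSemidef_smul_one_sub_smul {κ 𝕜 : Type*} [Fintype κ] [DecidableEq κ] [RCLike 𝕜]
    {S : Matrix κ κ 𝕜} (hS : S.IsHermitian) {γ c d : ℝ} (hγ : γ ∈ upperBounds (spectrum ℝ S))
    (hd : 0 ≤ d) (hcd : d * γ ≤ c) : (c • (1 : Matrix κ κ 𝕜) - d • S).PosSemidef := by
  have hle : S ≤ algebraMap ℝ _ γ := le_algebraMap_of_spectrum_le hγ hS
  rw [Algebra.algebraMap_eq_smul_one, Matrix.le_iff] at hle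
  have hsplit : c • (1 : Matrix κ κ 𝕜) - d • S = (c - d * γ) • 1 + d • (γ • 1 - S) := by module
  rw [hsplit]
  exact (PosSemidef.one.smul (sub_nonneg.2 hcd)).add (hle.smul hd)

theorem schurStableC_of_posDef_sub_conjTranspose_mul_mul {ι : Type*} [Fintype ι] [DecidableEq ι]
    {N P : Matrix ι ι ℂ} (hP : P.PosSemidef) (hN : (P - Nᴴ * P * N).PosDef) : SchurStableC N := by
  intro μ hμ
  rw [← spectrum_toLin', ← Module.End.hasEigenvalue_iff_mem_spectrum] at hμ
  obtain ⟨v, hv⟩ := hμ.exists_hasEigenvector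
  have hNv : N *ᵥ v = μ • v := by simpa only [toLin'_apply] using hv.apply_eq_smul
  have hform : star v ⬝ᵥ ((P - Nᴴ * P * N) *ᵥ v) =
      ((1 - ‖μ‖ ^ 2 : ℝ) : ℂ) * (star v ⬝ᵥ (P *ᵥ v)) := by
    rw [sub_mulVec, dotProduct_sub, ← mulVec_mulVec, ← mulVec_mulVec, dotProduct_mulVec _ Nᴴ,
      ← star_mulVec, hNv, mulVec_smul, star_smul, smul_dotProduct, dotProduct_smul, smul_smul,
      RCLike.star_def, smul_eq_mul, Complex.conj_mul']
    push_cast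
    ring
  by_contra! hge
  have hfactor : ((1 - ‖μ‖ ^ 2 : ℝ) : ℂ) ≤ 0 := by
    exact_mod_cast sub_nonpos.2 (one_le_pow₀ hge)
  refine (hN.dotProduct_mulVec_pos hv.2).not_ge (hform ▸ ?_)
  exact mul_nonpos_of_nonpos_of_nonneg hfactor (hP.dotProduct_mulVec_nonneg v)

theorem norm_sub_one_add_one_div_lt_iff {γ : ℝ} (hγ : 0 < γ) (lam : ℂ) :
    ‖lam - (1 + 1 / (γ : ℂ))‖ < √(1 + γ) / γ ↔ ‖lam - 1‖ ^ 2 * γ < 2 * lam.re - 1 := by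
  have hcast : lam - (1 + 1 / (γ : ℂ)) = lam - 1 - ((1 / γ : ℝ) : ℂ) := by push_cast; ring
  have hexpand : (‖lam - (1 + 1 / (γ : ℂ))‖ * γ) ^ 2 =
      1 + γ * (‖lam - 1‖ ^ 2 * γ - 2 * (lam.re - 1)) := by
    rw [hcast, mul_pow, Complex.sq_norm, Complex.sq_norm, Complex.normSq_apply,
      Complex.normSq_apply]
    simp only [Complex.sub_re, Complex.sub_im, Complex.one_re, Complex.one_im, Complex.ofReal_re,
      Complex.ofReal_im]
    field_simp
    ring
  rw [lt_div_iff₀ hγ, Real.lt_sqrt (by positivity), hexpand, add_lt_add_iff_left,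
    mul_lt_iff_lt_one_right hγ]
  constructor <;> intro h <;> linarith

theorem IsRiccatiSolution.schurStableC_add_smul {ι κ : Type*} [Fintype ι] [DecidableEq ι]
    [Fintype κ] [DecidableEq κ] {A P Q : Matrix ι ι ℂ} {B : Matrix ι κ ℂ}
    (h : IsRiccatiSolution A B Q P) (hQ : Q.PosDef) (hP : P.PosSemidef) {γ : ℝ}
    (hγ : γ ∈ upperBounds (spectrum ℝ (Bᴴ * P * B))) {lam : ℂ}
    (hlam : ‖lam - 1‖ ^ 2 * γ ≤ 2 * lam.re - 1) :
    SchurStableC (A + lam • (B * riccatiGain A B P)) := by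
  have hS : (Bᴴ * P * B).PosSemidef := hP.conjTranspose_mul_mul_same B
  have hR : IsUnit (Bᴴ * P * B + 1) := (PosDef.posSemidef_add hS PosDef.one).isUnit
  have hre : lam + star lam - 1 = ((2 * lam.re - 1 : ℝ) : ℂ) := by
    rw [RCLike.star_def, Complex.add_conj, Complex.ofReal_sub, Complex.ofReal_one]
  have hnorm : star (lam - 1) * (lam - 1) = ((‖lam - 1‖ ^ 2 : ℝ) : ℂ) := by
    rw [RCLike.star_def, Complex.conj_mul', Complex.ofReal_pow]
  apply schurStableC_of_posDef_sub_conjTranspose_mul_mul hP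
  rw [h.sub_conjTranspose_mul_mul hP.isHermitian hR, hre, hnorm, Complex.coe_smul,
    Complex.coe_smul]
  have hweight := posSemidef_smul_one_sub_smul hS.isHermitian hγ (sq_nonneg _) hlam
  exact hQ.add_posSemidef (hweight.conjTranspose_mul_mul_same _)

/- Real and complex systems are treated at once: `f` is the inclusion of `ℝ`, or an automorphism of
`ℂ` over `ℝ`. -/
theorem lowgain_uncertain_stabilization_general {ι κ 𝕜 : Type*} [Fintype ι] [DecidableEq ι]
    [Fintype κ] [DecidableEq κ] [RCLike 𝕜] (f : 𝕜 →⋆ₐ[ℝ] ℂ) {A P Q : Matrix ι ι 𝕜}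
    {B : Matrix ι κ 𝕜} (h : IsRiccatiSolution A B Q P) (hQ : Q.PosDef) (hP : P.PosSemidef)
    {γ : ℝ} (hγ : γ ∈ upperBounds (spectrum ℝ (Bᴴ * P * B))) {lam : ℂ}
    (hlam : ‖lam - (1 + 1 / (γ : ℂ))‖ < √(1 + γ) / γ) :
    SchurStableC (A.map f + lam • (B * riccatiGain A B P).map f) := by
  -- If `γ ≤ 0` then the disc is empty, also at `γ = 0`, where division by zero gives radius `0`.
  have hγpos : 0 < γ := by
    by_contra! hγle
    exact ((norm_nonneg _).trans_lt hlam).not_ge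
      (div_nonpos_of_nonneg_of_nonpos (Real.sqrt_nonneg _) hγle)
  have hbound : γ ∈ upperBounds (spectrum ℝ ((B.map f)ᴴ * P.map f * B.map f)) := by
    rw [← conjTranspose_map f (map_star f), ← Matrix.map_mul, ← Matrix.map_mul, spectrum_matrix_map]
    exact hγ
  rw [Matrix.map_mul, ← riccatiGain_map]
  exact (h.map f).schurStableC_add_smul (posDef_map f hQ) (posSemidef_map f hP) hbound
    ((norm_sub_one_add_one_div_lt_iff hγpos lam).1 hlam).le

/-- low-gain stabilization of a linear uncertain system
(Lemma 2 of the paper, from Lee–Kim–Shim): for any `λ ∈ ℂ` in the disc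
`|λ - (1 + 1/γ_δ)| < √(1+γ_δ)/γ_δ`, the matrix `A + λ B F_δ` is Schur stable. -/
theorem lowgain_uncertain_stabilization {n m : ℕ}
    (A : Matrix (Fin n) (Fin n) ℝ) (B : Matrix (Fin n) (Fin m) ℝ)
    (hstab : Stabilizable A B) (hA : EigInClosedUnitDisc A)
    (δ : ℝ) (hδ : 0 < δ) (P : Matrix (Fin n) (Fin n) ℝ)
    (hPpos : P.PosDef)
    (hP : P = Aᵀ * P * A + δ • (1 : Matrix (Fin n) (Fin n) ℝ)
        - Aᵀ * P * B * (Bᵀ * P * B + 1)⁻¹ * (Bᵀ * P * A))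
    (F : Matrix (Fin m) (Fin n) ℝ)
    (hF : F = -((Bᵀ * P * B + 1)⁻¹ * (Bᵀ * P * A)))
    (γ : ℝ) (hγ : IsGreatest (spectrum ℝ (Bᵀ * P * B)) γ)
    (lam : ℂ) (hlam : ‖lam - (1 + 1 / (γ : ℂ))‖ < Real.sqrt (1 + γ) / γ) :
    SchurStableC (A.map Complex.ofReal + lam • (B * F).map Complex.ofReal) := by
  subst hF
  exact lowgain_uncertain_stabilization_general (StarAlgHom.ofId ℝ ℂ) hP
    (PosDef.one.smul hδ) hPpos.posSemidef hγ.2 hlam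

end
end
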